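/- Suppose α has an adjusted nearest integer expansion with liminf_{i→∞} a_i = 2, and let d_n^± be the quantities associated to γ_*. Let θ_1 := (√13 − 3)/2. If σ ∈ {+1, −1} satisfies σ·d_i^+ > 0 and ᾱ_i < 1/2, then (1/4)·(1 − ᾱ_i + σ·d_i^−)·(1 + ε_{i+1}α_i + σ·d_i^+)/(1 + ε_{i+1}ᾱ_i α_i) ≥ (1/4)·(√10 − 3)·(3 − θ_1 − θ_1/(1 − θ_1))/((11 − √10)/3 − θ_1) (= 1/25.159…). -/

import Mathlib

open Filter Finset

attribute [local instance] Classical.propDecidable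

/-- Distance from `x` to the nearest integer, `‖x‖`. -/
noncomputable def nint (x : ℝ) : ℝ := |x - round x|

/-- The two-sided inhomogeneous approximation constant
`M(α,γ) = liminf_{|n|→∞} |n|·‖nα-γ‖`. -/
noncomputable def Mval (α γ : ℝ) : ℝ :=
  Filter.liminf (fun n : ℤ => (|n| : ℝ) * nint (n * α - γ)) Filter.cofinite

/-- Denominators `q_i` of a semi-regular continued fraction with partial quotients `a`
and signs `e`: `q_0 = 1`, `q_1 = a_1`, `q_i = a_i q_{i-1} + ε_i q_{i-2}`. -/
noncomputable def qs (a e : ℕ → ℤ) : ℕ → ℤ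
  | 0 => 1
  | 1 => a 1
  | i + 2 => a (i + 2) * qs a e (i + 1) + e (i + 2) * qs a e i

/-- Reversed tails `ᾱ_i = q_{i-1}/q_i` (with `ᾱ_0 = 0`). -/
noncomputable def ab (a e : ℕ → ℤ) (i : ℕ) : ℝ :=
  if i = 0 then 0 else (qs a e (i - 1) : ℝ) / (qs a e i : ℝ)

/-- An adjusted nearest integer expansion of `α`: a semi-regular continued fraction
`α = 1/(a_1 + ε_2/(a_2 + ε_3/(a_3 + ⋯)))` with tails `t i = α_i`, satisfying the
conditions (i)-(iv) of an adjusted expansion. -/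
structure ANIE (α : ℝ) where
  /-- partial quotients `a_i` (for `i ≥ 1`) -/
  a : ℕ → ℤ
  /-- signs `ε_i` -/
  e : ℕ → ℤ
  /-- tails: `t i = α_i`, `t 0 = α` -/
  t : ℕ → ℝ
  ha : ∀ i, 1 ≤ i → 2 ≤ a i
  he : ∀ i, e i = 1 ∨ e i = -1
  he1 : e 1 = 1
  ht0 : t 0 = α
  htpos : ∀ i, 0 < t i
  htlt1 : ∀ i, t i < 1
  hrec : ∀ i, t i = 1 / ((a (i + 1) : ℝ) + (e (i + 2) : ℝ) * t (i + 1))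
  /-- condition (i): `a_i = 2` implies `ε_i = +1` or `ε_{i+1} = +1` -/
  hcond1 : ∀ i, 1 ≤ i → a i = 2 → e i = 1 ∨ e (i + 1) = 1
  /-- condition (ii): if `a_i = 2`, `ε_i = -1` then `1/ᾱ_{i-1} - 1/α_i ≥ 1` -/
  hcond2 : ∀ i, 1 ≤ i → a i = 2 → e i = -1 → 1 / ab a e (i - 1) - 1 / t i ≥ 1
  /-- condition (iii): if `a_i = 2`, `ε_{i+1} = -1` then `1/α_i - 1/ᾱ_{i-1} > 1` -/
  hcond3 : ∀ i, 1 ≤ i → a i = 2 → e (i + 1) = -1 → 1 / t i - 1 / ab a e (i - 1) > 1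
  /-- condition (iv): no block `2, (-3,)^k, -2` in the sequence `(ε_i a_i)` -/
  hcond4 : ∀ i k, 1 ≤ i →
    ¬(e i * a i = 2 ∧ (∀ j, j < k → e (i + 1 + j) * a (i + 1 + j) = -3) ∧
        e (i + 1 + k) * a (i + 1 + k) = -2)

namespace ANIE

variable {α : ℝ}

/-- `D n = D_{n-1} = α_0 α_1 ⋯ α_{n-1}` (so `D 0 = 1`, `D 1 = α`). -/
noncomputable def D (E : ANIE α) (n : ℕ) : ℝ := ∏ j ∈ Finset.range n, E.t j

/-- The number of indices `1 ≤ k ≤ i` with `a_k` odd. -/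
noncomputable def oddIdx (E : ANIE α) (i : ℕ) : ℕ :=
  ((Finset.Icc 1 i).filter fun k => Odd (E.a k)).card

/-- `λ_i`: zero if `a_i` is even, `(-1)^j` if `a_i = a_{n_j}` is the `j`-th odd partial
quotient. -/
noncomputable def lam (E : ANIE α) (i : ℕ) : ℤ :=
  if Odd (E.a i) then (-1) ^ E.oddIdx i else 0

/-- `γ_* = Σ_{i≥1} (a_i - 1 + ε_i + λ_i)/2 · D_{i-1}`. -/
noncomputable def gammaStar (E : ANIE α) : ℝ :=
  ∑' k : ℕ,
    (((E.a (k + 1) : ℝ) - 1 + (E.e (k + 1) : ℝ) + (E.lam (k + 1) : ℝ)) / 2) * E.D (k + 1)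

/-- `ᾱ_i = q_{i-1}/q_i`. -/
noncomputable def abar (E : ANIE α) (i : ℕ) : ℝ := ab E.a E.e i

/-- `δ_i = -(-ε_1)(-ε_2)⋯(-ε_{i+1})`. -/
noncomputable def delta (E : ANIE α) (i : ℕ) : ℤ := -∏ j ∈ Finset.Icc 1 (i + 1), (-E.e j)

/-- `d_n^- = (Σ_{i=1}^n t_i δ_{i-1} q_{i-1}) / (δ_{n-1} q_n)` for `γ_*` (`t_i = λ_i`). -/
noncomputable def dminus (E : ANIE α) (n : ℕ) : ℝ :=
  (∑ i ∈ Finset.Icc 1 n, (E.lam i : ℝ) * (E.delta (i - 1) : ℝ) * (qs E.a E.e (i - 1) : ℝ)) /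
    ((E.delta (n - 1) : ℝ) * (qs E.a E.e n : ℝ))

/-- `d_n^+ = (Σ_{i=n+1}^∞ t_i D_{i-1}) / D_{n-1}` for `γ_*` (`t_i = λ_i`). -/
noncomputable def dplus (E : ANIE α) (n : ℕ) : ℝ :=
  (∑' k : ℕ, (E.lam (n + 1 + k) : ℝ) * E.D (n + 1 + k)) / E.D n

/-- `i ∈ S(γ_*)`: `|d_i^-| ≤ 1 - ᾱ_i` and `-(1-ε_{i+1}α_i) ≤ d_i^+ ≤ 1+ε_{i+1}α_i`. -/
def inS (E : ANIE α) (i : ℕ) : Prop :=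
  |E.dminus i| ≤ 1 - E.abar i ∧
    -(1 - (E.e (i + 1) : ℝ) * E.t i) ≤ E.dplus i ∧
      E.dplus i ≤ 1 + (E.e (i + 1) : ℝ) * E.t i

end ANIE

/-!
Multiplying `d_n^-` and `d_n^+` by `±(-1)^j`, with `j` the number of odd partial quotients up to
`n`, removes the alternation: the normalised deviations `g_n` and `h_n ≥ 0` obey recursions that
depend only on `a` and `ε`, and the claim becomes
`c (1 + ε_{n+1} ᾱ_n α_n) ≤ (1 - ᾱ_n - g_n) (1 + ε_{n+1} α_n + h_n)`.

When `a_n ≠ 3` the first factor on the right is already large enough. When `a_n = 3` the recursion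
for `g_n` gives `1 - ᾱ_n - g_n = ᾱ_n (1 + ε_n (ᾱ_{n-1} - g_{n-1}))`, which moves the claim one index
back. It stays far from sharp unless the digits `ε a` up to `n` end in `-2, 2, -3` and
`ε_{n+1} = -1`. There two further steps back leave `3 - ᾱ - g` as the first factor. Its ratio to
`(11 - √10) / 3 - ᾱ` is smallest when a long run of digits `3` precedes the block, and the only
critical continuation is the digit `-4` followed by a negative sign. Then `α_n - h_n` is at most
`(4 - √10) / 3`: an excess would force the expansion to continue with `-4, -2, 2, 2` and would at
least double over these four digits, which cannot go on forever.
-/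

/-! ### Steps of a semi-regular continued fraction -/

/-- One step `x = 1 / (a + ε y)` of a semi-regular continued fraction. Both the tails `α_i` and the
reversed tails `ᾱ_i` evolve by such steps, so estimates proved for a step serve both. -/
structure IsCFStep (a ε : ℤ) (y x : ℝ) : Prop where
  two_le : 2 ≤ a
  sign : ε = 1 ∨ ε = -1
  nonneg : 0 ≤ y
  lt_one : y < 1
  mul_eq_one : x * (a + ε * y) = 1

namespace IsCFStep

variable {a ε : ℤ} {x y : ℝ}

lemma denom_pos (s : IsCFStep a ε y x) : (0 : ℝ) < a + ε * y := by
  have ha : (2 : ℝ) ≤ a := mod_cast s.two_le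
  have hy := s.lt_one
  have hy' := s.nonneg
  rcases s.sign with hε | hε <;> rw [hε] <;> push_cast <;> linarith

lemma pos (s : IsCFStep a ε y x) : 0 < x :=
  pos_of_mul_pos_left (s.mul_eq_one ▸ one_pos) s.denom_pos.le

lemma le_iff (s : IsCFStep a ε y x) {c : ℝ} : x ≤ c ↔ 1 ≤ c * (a + ε * y) := by
  rw [← s.mul_eq_one, mul_le_mul_iff_left₀ s.denom_pos]

lemma ge_iff (s : IsCFStep a ε y x) {c : ℝ} : c ≤ x ↔ c * (a + ε * y) ≤ 1 := by
  rw [← s.mul_eq_one, mul_le_mul_iff_left₀ s.denom_pos]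

lemma sub_eq {x' y' : ℝ} (s : IsCFStep a ε y x) (hx' : x' * (a + ε * y') = 1) :
    x - x' = x * x' * (ε * (y' - y)) := by
  linear_combination x' * s.mul_eq_one - x * hx'

lemma lt_iff {x' y' : ℝ} (s : IsCFStep a ε y x) (hx' : x' * (a + ε * y') = 1) (hpos : 0 < x') :
    x' < x ↔ 0 < ε * (y' - y) := by
  rw [← sub_pos, s.sub_eq hx', mul_pos_iff_of_pos_left (mul_pos s.pos hpos)]

lemma le_half (s : IsCFStep a ε y x) (h : a = 2 → ε = 1) : x ≤ 1 / 2 := by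
  have hy := s.lt_one
  have hy' := s.nonneg
  rw [s.le_iff]
  rcases s.two_le.eq_or_lt' with ha | ha
  · rw [h ha, ha]
    push_cast
    linarith
  · have ha' : (3 : ℝ) ≤ a := mod_cast ha
    rcases s.sign with hε | hε <;> rw [hε] <;> push_cast <;> linarith

lemma le_inv (s : IsCFStep a ε y x) (hε : ε = 1) {k : ℤ} (hk0 : 0 < k) (hk : k ≤ a) :
    x ≤ (k : ℝ)⁻¹ := by
  have hk0' : (0 : ℝ) < k := mod_cast hk0
  have hk' : (k : ℝ) ≤ a := mod_cast hk
  rw [s.le_iff, hε, Int.cast_one, one_mul, le_inv_mul_iff₀ hk0']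
  linarith [s.nonneg]

lemma le_two_div (s : IsCFStep a ε y x) (hy : ε = -1 → y ≤ 1 / 2) {k : ℤ} (hk0 : 0 < k)
    (hk : k ≤ a) : x ≤ 2 / (2 * k - 1) := by
  have hk0' : (1 : ℝ) ≤ k := mod_cast hk0
  have hk' : (k : ℝ) ≤ a := mod_cast hk
  rw [s.le_iff, div_mul_eq_mul_div, one_le_div (by linarith)]
  rcases s.sign with hε | hε
  · rw [hε]
    push_cast
    linarith [s.nonneg]
  · have := hy hε
    rw [hε]
    push_cast
    linarith

lemma le_golden (s : IsCFStep a ε y x) (hy : ε = -1 → y ≤ 1 / 2)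
    (hy2 : a = 2 → ε = -1 → y ≤ 382 / 1000) : x ≤ 6181 / 10000 := by
  rcases s.two_le.eq_or_lt' with ha | ha
  · rcases s.sign with hε | hε
    · linarith [s.le_half fun _ => hε]
    · have := hy2 ha hε
      rw [s.le_iff, ha, hε]
      push_cast
      linarith
  · have := s.le_two_div hy (by norm_num : (0 : ℤ) < 3) ha
    norm_num at this
    linarith

end IsCFStep

lemma mul_three_sub_le {u v x : ℝ} (hu : u * (1 + x) ≤ x) (hx : x * (2 - v) = 1) (hv : v < 2) :
    u * (3 - v) ≤ 1 :=
  calc u * (3 - v) = u * (1 + x) * (2 - v) := by linear_combination -u * hx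
    _ ≤ x * (2 - v) := by gcongr
    _ = 1 := hx

-- The bound approximates `(3 - √5) / 2`, the smaller root of `u * (3 - u) = 1`.
lemma le_of_mul_three_sub_le {u v : ℝ} (hu : 0 ≤ u) (hu1 : u < 1) (huv : u * (3 - v) ≤ 1)
    (hvu : v * (3 - u) ≤ 1) : u ≤ 382 / 1000 := by
  have hroot : u * (3 - u) ≤ 1 := by
    rcases le_total u v with h | h
    · exact (mul_le_mul_of_nonneg_right h (by linarith)).trans hvu
    · exact (mul_le_mul_of_nonneg_left (by linarith) hu).trans huv
  nlinarith

lemma lt_of_mul_one_add_le {u v : ℝ} (h : u * (1 + v) ≤ v) (hv : 0 < v)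
    (hu : 276 / 1000 ≤ u) : 381 / 1000 < v := by
  nlinarith

/-! ### Tails and reversed tails -/

lemma qs_pos_and_lt_succ {a e : ℕ → ℤ} (ha : ∀ i, 1 ≤ i → 2 ≤ a i)
    (he : ∀ i, e i = 1 ∨ e i = -1) (n : ℕ) : 0 < qs a e n ∧ qs a e n < qs a e (n + 1) := by
  induction n with
  | zero =>
    have := ha 1 le_rfl
    simp only [qs]
    omega
  | succ n ih =>
    obtain ⟨hpos, hlt⟩ := ih
    have ha' := ha (n + 2) (by omega)
    refine ⟨hpos.trans hlt, ?_⟩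
    rw [qs]
    rcases he (n + 2) with h | h <;> rw [h] <;> nlinarith

namespace ANIE

variable {α : ℝ} (E : ANIE α)

lemma qs_pos (n : ℕ) : (0 : ℝ) < qs E.a E.e n :=
  mod_cast (qs_pos_and_lt_succ E.ha E.he n).1

lemma abar_zero : E.abar 0 = 0 := by simp [abar, ab]

lemma abar_succ (n : ℕ) :
    E.abar (n + 1) = (qs E.a E.e n : ℝ) / (qs E.a E.e (n + 1) : ℝ) := by
  simp [abar, ab]

lemma abar_nonneg : ∀ n, 0 ≤ E.abar n
  | 0 => E.abar_zero.ge
  | n + 1 => E.abar_succ n ▸ div_nonneg (E.qs_pos n).le (E.qs_pos (n + 1)).le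

lemma abar_lt_one : ∀ n, E.abar n < 1
  | 0 => E.abar_zero ▸ one_pos
  | n + 1 => by
    rw [abar_succ, div_lt_one (E.qs_pos _)]
    exact_mod_cast (qs_pos_and_lt_succ E.ha E.he n).2

lemma abar_mul_eq_one (n : ℕ) :
    E.abar (n + 1) * ((E.a (n + 1) : ℝ) + (E.e (n + 1) : ℝ) * E.abar n) = 1 := by
  have hpos := E.qs_pos (n + 1)
  rw [abar_succ, div_mul_eq_mul_div, div_eq_one_iff_eq hpos.ne']
  rcases n with _ | n
  · simp [abar_zero, qs]
  · rw [abar_succ, show qs E.a E.e (n + 1 + 1) =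
      E.a (n + 2) * qs E.a E.e (n + 1) + E.e (n + 2) * qs E.a E.e n from rfl]
    push_cast
    have hpos' := E.qs_pos (n + 1)
    field_simp

lemma t_mul_eq_one (n : ℕ) :
    E.t n * ((E.a (n + 1) : ℝ) + (E.e (n + 2) : ℝ) * E.t (n + 1)) = 1 := by
  have hne : (E.a (n + 1) : ℝ) + (E.e (n + 2) : ℝ) * E.t (n + 1) ≠ 0 := fun h =>
    (E.htpos n).ne' (by rw [E.hrec n, h, div_zero])
  rw [E.hrec n]
  exact one_div_mul_cancel hne

lemma abar_step {n : ℕ} {a ε : ℤ} (ha : E.a (n + 1) = a) (he : E.e (n + 1) = ε) :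
    IsCFStep a ε (E.abar n) (E.abar (n + 1)) where
  two_le := ha ▸ E.ha (n + 1) (by omega)
  sign := he ▸ E.he (n + 1)
  nonneg := E.abar_nonneg n
  lt_one := E.abar_lt_one n
  mul_eq_one := ha ▸ he ▸ E.abar_mul_eq_one n

lemma t_step {n : ℕ} {a ε : ℤ} (ha : E.a (n + 1) = a) (he : E.e (n + 2) = ε) :
    IsCFStep a ε (E.t (n + 1)) (E.t n) where
  two_le := ha ▸ E.ha (n + 1) (by omega)
  sign := he ▸ E.he (n + 2)
  nonneg := (E.htpos (n + 1)).le
  lt_one := E.htlt1 (n + 1)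
  mul_eq_one := ha ▸ he ▸ E.t_mul_eq_one n

lemma abar_pos (n : ℕ) : 0 < E.abar (n + 1) := (E.abar_step rfl rfl).pos

lemma exists_eq_succ_of_e_eq_neg_one {n : ℕ} (he : E.e (n + 1) = -1) :
    ∃ m, n = m + 1 := by
  refine Nat.exists_eq_succ_of_ne_zero fun hn => ?_
  rw [hn, zero_add, E.he1] at he
  omega

lemma abar_mul_one_add_le {n : ℕ} (ha : E.a (n + 1) = 2) (he : E.e (n + 1) = -1) :
    E.abar n * (1 + E.t (n + 1)) ≤ E.t (n + 1) := by
  obtain ⟨m, rfl⟩ := E.exists_eq_succ_of_e_eq_neg_one he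
  have hb := E.abar_pos m
  have ht := E.htpos (m + 2)
  have hc : 1 / E.abar (m + 1) - 1 / E.t (m + 2) ≥ 1 := E.hcond2 (m + 2) (by omega) ha he
  have hmul := mul_le_mul_of_nonneg_right hc (mul_pos hb ht).le
  have heq : (1 / E.abar (m + 1) - 1 / E.t (m + 2)) * (E.abar (m + 1) * E.t (m + 2)) =
      E.t (m + 2) - E.abar (m + 1) := by
    field_simp
  rw [heq] at hmul
  linarith

lemma t_mul_one_add_lt (h12 : α < 1 / 2) {n : ℕ} (ha : E.a (n + 1) = 2)
    (he : E.e (n + 2) = -1) : E.t (n + 1) * (1 + E.abar n) < E.abar n := by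
  rcases n with _ | m
  · have hα : 1 / 2 ≤ E.t 0 := by
      rw [(E.t_step ha he).ge_iff]
      push_cast
      linarith [E.htpos (0 + 1)]
    linarith [E.ht0]
  · have hb := E.abar_pos m
    have ht := E.htpos (m + 2)
    have hc : 1 < 1 / E.t (m + 2) - 1 / E.abar (m + 1) := E.hcond3 (m + 2) (by omega) ha he
    have hmul := mul_lt_mul_of_pos_right hc (mul_pos hb ht)
    have heq : (1 / E.t (m + 2) - 1 / E.abar (m + 1)) * (E.abar (m + 1) * E.t (m + 2)) =
        E.abar (m + 1) - E.t (m + 2) := by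
      field_simp
    rw [heq] at hmul
    linarith

lemma a_ne_two_of_two_three {n : ℕ} (ha : E.a (n + 1) = 2) (he : E.e (n + 1) = 1)
    (ha' : E.a (n + 2) = 3) (he' : E.e (n + 2) = -1) (he'' : E.e (n + 3) = -1) :
    E.a (n + 3) ≠ 2 := fun ha'' =>
  E.hcond4 (n + 1) 1 (by omega) ⟨by rw [ha, he]; rfl, fun j hj => by
    obtain rfl : j = 0 := by omega
    change E.e (n + 2) * E.a (n + 2) = -3
    rw [ha', he']
    rfl, show E.e (n + 3) * E.a (n + 3) = -2 by rw [ha'', he'']; rfl⟩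

lemma e_eq_one_of_two {n : ℕ} (ha : E.a (n + 1) = 2) (he : E.e (n + 2) = -1) :
    E.e (n + 1) = 1 := by
  have := E.hcond1 (n + 1) (by omega) ha
  rw [show n + 1 + 1 = n + 2 from rfl] at this
  omega

lemma e_succ_eq_one_of_two {n : ℕ} (ha : E.a (n + 1) = 2) (he : E.e (n + 1) = -1) :
    E.e (n + 2) = 1 :=
  (E.hcond1 (n + 1) (by omega) ha).resolve_left (by omega)

lemma t_le_half {n : ℕ} (he : E.e (n + 1) = -1) : E.t n ≤ 1 / 2 :=
  (E.t_step rfl rfl).le_half fun ha => E.e_succ_eq_one_of_two ha he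

lemma abar_le_half {n : ℕ} (he : E.e (n + 1) = -1) : E.abar n ≤ 1 / 2 := by
  obtain ⟨m, rfl⟩ := E.exists_eq_succ_of_e_eq_neg_one he
  exact (E.abar_step rfl rfl).le_half fun ha => E.e_eq_one_of_two ha he

lemma abar_le_third_of_t_le_half {n : ℕ} (ha : E.a (n + 1) = 2)
    (he : E.e (n + 1) = -1) (ht : E.t (n + 1) ≤ 1 / 2) : E.abar n ≤ 1 / 3 := by
  have := E.abar_mul_one_add_le ha he
  have := E.abar_nonneg n
  have := E.abar_lt_one n
  nlinarith

lemma t_le_third_of_abar_le_half (h12 : α < 1 / 2) {n : ℕ} (ha : E.a (n + 1) = 2)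
    (he : E.e (n + 2) = -1) (hb : E.abar n ≤ 1 / 2) : E.t (n + 1) ≤ 1 / 3 := by
  have := E.t_mul_one_add_lt h12 ha he
  have := E.htlt1 (n + 1)
  nlinarith

/- In a block `-2, 2` conditions (ii) and (iii) make the two neighbouring tails bound each other, so
that both stay below `(3 - √5) / 2`. -/
lemma abar_and_t_le_of_two_two (h12 : α < 1 / 2) {n : ℕ} (ha : E.a (n + 1) = 2)
    (he : E.e (n + 1) = -1) (ha' : E.a (n + 2) = 2) (he' : E.e (n + 3) = -1) :
    E.abar n ≤ 382 / 1000 ∧ E.t (n + 2) ≤ 382 / 1000 := by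
  have hb := (E.abar_step ha he).mul_eq_one
  have ht := (E.t_step (n := n + 1) ha' he').mul_eq_one
  push_cast at hb ht
  have hbt : E.abar n * (3 - E.t (n + 2)) ≤ 1 :=
    mul_three_sub_le (E.abar_mul_one_add_le ha he) (by linarith) (by linarith [E.htlt1 (n + 2)])
  have htb : E.t (n + 2) * (3 - E.abar n) ≤ 1 :=
    mul_three_sub_le (E.t_mul_one_add_lt h12 ha' he').le (by linarith)
      (by linarith [E.abar_lt_one n])
  exact ⟨le_of_mul_three_sub_le (E.abar_nonneg n) (E.abar_lt_one n) hbt htb,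
    le_of_mul_three_sub_le (E.htpos _).le (E.htlt1 _) htb hbt⟩

lemma abar_le_of_two_neg (h12 : α < 1 / 2) {n : ℕ} (ha : E.a (n + 1) = 2)
    (he : E.e (n + 1) = -1) : E.abar n ≤ 382 / 1000 := by
  by_cases h : E.a (n + 2) = 2 ∧ E.e (n + 3) = -1
  · exact (E.abar_and_t_le_of_two_two h12 ha he h.1 h.2).1
  · have ht : E.t (n + 1) ≤ 1 / 2 := (E.t_step rfl rfl).le_half fun ha' =>
      (E.he (n + 3)).resolve_right fun he' => h ⟨ha', he'⟩
    linarith [E.abar_le_third_of_t_le_half ha he ht]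

lemma t_le_of_two_neg (h12 : α < 1 / 2) {n : ℕ} (ha : E.a (n + 1) = 2)
    (he : E.e (n + 2) = -1) : E.t (n + 1) ≤ 382 / 1000 := by
  rcases n with _ | m
  · linarith [E.t_le_third_of_abar_le_half h12 ha he (by rw [abar_zero]; norm_num)]
  by_cases h : E.a (m + 1) = 2 ∧ E.e (m + 1) = -1
  · exact (E.abar_and_t_le_of_two_two h12 h.1 h.2 ha he).2
  · have hb : E.abar (m + 1) ≤ 1 / 2 := (E.abar_step rfl rfl).le_half fun ha' =>
      (E.he (m + 1)).resolve_right fun he' => h ⟨ha', he'⟩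
    linarith [E.t_le_third_of_abar_le_half h12 ha he hb]

lemma t_le_golden (h12 : α < 1 / 2) (n : ℕ) : E.t n ≤ 6181 / 10000 :=
  (E.t_step rfl rfl).le_golden E.t_le_half fun ha he => E.t_le_of_two_neg h12 ha he

lemma abar_le_golden (h12 : α < 1 / 2) : ∀ n, E.abar n ≤ 6181 / 10000
  | 0 => by rw [abar_zero]; norm_num
  | _ + 1 => (E.abar_step rfl rfl).le_golden E.abar_le_half fun ha he =>
      E.abar_le_of_two_neg h12 ha he

lemma t_le_two_div {n : ℕ} {k : ℤ} (hk0 : 0 < k) (hk : k ≤ E.a (n + 1)) :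
    E.t n ≤ 2 / (2 * k - 1) :=
  (E.t_step rfl rfl).le_two_div E.t_le_half hk0 hk

lemma abar_le_two_div {n : ℕ} {k : ℤ} (hk0 : 0 < k) (hk : k ≤ E.a (n + 1)) :
    E.abar (n + 1) ≤ 2 / (2 * k - 1) :=
  (E.abar_step rfl rfl).le_two_div E.abar_le_half hk0 hk

lemma t_le_two_fifths {n : ℕ} (hk : 3 ≤ E.a (n + 1)) : E.t n ≤ 2 / 5 := by
  have := E.t_le_two_div (by norm_num) hk
  norm_num at this
  exact this

lemma abar_le_two_fifths {n : ℕ} (hk : 3 ≤ E.a (n + 1)) :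
    E.abar (n + 1) ≤ 2 / 5 := by
  have := E.abar_le_two_div (by norm_num) hk
  norm_num at this
  exact this

lemma three_le_of_ne_two {n : ℕ} (h : E.a (n + 1) ≠ 2) : 3 ≤ E.a (n + 1) := by
  have := E.ha (n + 1) (by omega)
  omega

end ANIE

/-! ### Recursions for the normalised deviations -/

lemma mem_Icc_of_contraction {t h : ℕ → ℝ} {q C : ℝ} (ht : ∀ n, t n ∈ Set.Icc 0 q) (hq : q < 1)
    (hC : ∀ n, |h n| ≤ C)
    (hrec : ∀ n, h n = t n * h (n + 1) ∨ h n = t n * (1 - h (n + 1))) (n : ℕ) :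
    h n ∈ Set.Icc 0 1 := by
  have hq0 : 0 ≤ q := (ht 0).1.trans (ht 0).2
  have hC0 : 0 ≤ C := (abs_nonneg _).trans (hC 0)
  have happrox (k : ℕ) : ∀ n, -(C * q ^ k) ≤ h n ∧ h n ≤ 1 + C * q ^ k := by
    induction k with
    | zero =>
      intro n
      have := abs_le.1 (hC n)
      constructor <;> linarith
    | succ k ih =>
      intro n
      obtain ⟨hlow, hupp⟩ := ih (n + 1)
      obtain ⟨ht0, htq⟩ := ht n
      have herr : t n * (C * q ^ k) ≤ C * q ^ (k + 1) :=
        calc t n * (C * q ^ k) ≤ q * (C * q ^ k) := by gcongr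
          _ = C * q ^ (k + 1) := by ring
      rcases hrec n with hn | hn <;> rw [hn] <;> constructor <;> nlinarith
  have hlim : Tendsto (fun k : ℕ => C * q ^ k) atTop (nhds 0) := by
    simpa using (tendsto_pow_atTop_nhds_zero_of_lt_one hq0 hq).const_mul C
  constructor
  · exact le_of_tendsto (by simpa using hlim.neg) (Eventually.of_forall fun k => (happrox k n).1)
  · exact ge_of_tendsto (by simpa using hlim.const_add 1)
      (Eventually.of_forall fun k => (happrox k n).2)

namespace ANIE

variable {α : ℝ} (E : ANIE α)

/-- The sign `(-1)^j`, where `j` is the number of odd partial quotients up to the index `n`. -/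
noncomputable def paritySign (n : ℕ) : ℝ := (-1) ^ E.oddIdx n

/-- The deviation `d_n^-` normalised by the parity sign, so that its recursion only involves the
parity of the partial quotient and no longer the position among the odd ones. -/
noncomputable def devMinus (n : ℕ) : ℝ := E.paritySign n * E.dminus n

/-- The deviation `d_n^+` normalised by minus the parity sign, which makes it nonnegative. -/
noncomputable def devPlus (n : ℕ) : ℝ := -(E.paritySign n * E.dplus n)

lemma paritySign_mul_self (n : ℕ) : E.paritySign n * E.paritySign n = 1 := by
  rw [paritySign, ← mul_pow]
  norm_num

lemma abs_paritySign (n : ℕ) : |E.paritySign n| = 1 := by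
  rw [paritySign, abs_pow, abs_neg, abs_one, one_pow]

lemma oddIdx_succ (n : ℕ) :
    E.oddIdx (n + 1) = E.oddIdx n + if Odd (E.a (n + 1)) then 1 else 0 := by
  rw [oddIdx, oddIdx, card_filter, card_filter, sum_Icc_succ_top (by omega)]

lemma paritySign_succ_of_odd {n : ℕ} (h : Odd (E.a (n + 1))) :
    E.paritySign (n + 1) = -E.paritySign n := by
  rw [paritySign, paritySign, oddIdx_succ, if_pos h, pow_succ, mul_neg_one]

lemma paritySign_succ_of_even {n : ℕ} (h : Even (E.a (n + 1))) :
    E.paritySign (n + 1) = E.paritySign n := by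
  rw [paritySign, paritySign, oddIdx_succ, if_neg (Int.not_odd_iff_even.2 h), add_zero]

lemma lam_succ_of_odd {n : ℕ} (h : Odd (E.a (n + 1))) :
    (E.lam (n + 1) : ℝ) = -E.paritySign n := by
  rw [← E.paritySign_succ_of_odd h, lam, if_pos h, paritySign]
  push_cast
  rfl

lemma lam_succ_of_even {n : ℕ} (h : Even (E.a (n + 1))) :
    (E.lam (n + 1) : ℝ) = 0 := by
  rw [lam, if_neg (Int.not_odd_iff_even.2 h), Int.cast_zero]

lemma abs_lam_le_one (n : ℕ) : |(E.lam n : ℝ)| ≤ 1 := by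
  rw [lam]
  split_ifs <;> simp

lemma delta_succ (n : ℕ) : E.delta (n + 1) = E.delta n * (-E.e (n + 2)) := by
  rw [delta, delta, prod_Icc_succ_top (by omega), neg_mul]

lemma delta_ne_zero (n : ℕ) : (E.delta n : ℝ) ≠ 0 := by
  refine Int.cast_ne_zero.2 (neg_ne_zero.2 (prod_ne_zero_iff.2 fun j _ => ?_))
  rcases E.he j with h | h <;> rw [h] <;> decide

lemma e_mul_self (n : ℕ) : (E.e n : ℝ) * E.e n = 1 := by
  rcases E.he n with h | h <;> rw [h] <;> norm_num

lemma dminus_zero : E.dminus 0 = 0 := by simp [dminus]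

lemma dminus_succ (n : ℕ) :
    E.dminus (n + 1) =
      E.abar (n + 1) * ((E.lam (n + 1) : ℝ) - (E.e (n + 1) : ℝ) * E.dminus n) := by
  have hq := E.qs_pos (n + 1)
  rcases n with _ | n
  · have hδ := E.delta_ne_zero 0
    rw [dminus_zero, abar_succ, dminus, sum_Icc_succ_top (by omega)]
    simp
    field_simp
  · have hδ := E.delta_ne_zero n
    have hδ' := E.delta_ne_zero (n + 1)
    have hq' := E.qs_pos (n + 1)
    have hrec : (E.delta (n + 1) : ℝ) = E.delta n * (-E.e (n + 2)) := by
      rw [delta_succ]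
      push_cast
      ring
    rw [dminus, dminus, abar_succ, sum_Icc_succ_top (by omega)]
    simp only [Nat.add_sub_cancel]
    set S : ℝ := ∑ i ∈ Icc 1 (n + 1), (E.lam i : ℝ) * E.delta (i - 1) * qs E.a E.e (i - 1)
    field_simp
    rw [hrec]
    linear_combination (-S * E.delta n) * E.e_mul_self (n + 2)

lemma D_pos (n : ℕ) : 0 < E.D n := prod_pos fun j _ => E.htpos j

lemma D_succ (n : ℕ) : E.D (n + 1) = E.D n * E.t n := prod_range_succ _ _

lemma D_add_le (h12 : α < 1 / 2) (n k : ℕ) :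
    E.D (n + k) ≤ E.D n * (6181 / 10000) ^ k := by
  induction k with
  | zero => simp
  | succ k ih =>
    rw [← add_assoc, D_succ, pow_succ, ← mul_assoc]
    exact mul_le_mul ih (E.t_le_golden h12 _) (E.htpos _).le
      (mul_nonneg (E.D_pos n).le (by positivity))

lemma norm_lam_mul_D_le (h12 : α < 1 / 2) (n k : ℕ) :
    ‖(E.lam (n + 1 + k) : ℝ) * E.D (n + 1 + k)‖ ≤ E.D n * (6181 / 10000) ^ k := by
  rw [norm_mul, Real.norm_eq_abs, Real.norm_eq_abs, abs_of_pos (E.D_pos _)]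
  calc |(E.lam (n + 1 + k) : ℝ)| * E.D (n + 1 + k)
      ≤ E.D (n + 1 + k) := mul_le_of_le_one_left (E.D_pos _).le (E.abs_lam_le_one _)
    _ ≤ E.D (n + 1) * (6181 / 10000) ^ k := E.D_add_le h12 (n + 1) k
    _ ≤ E.D n * (6181 / 10000) ^ k := by
        gcongr
        rw [D_succ]
        exact mul_le_of_le_one_right (E.D_pos n).le (E.htlt1 n).le

lemma hasSum_D_mul_pow (n : ℕ) :
    HasSum (fun k : ℕ => E.D n * (6181 / 10000 : ℝ) ^ k) (E.D n * (1 - 6181 / 10000)⁻¹) :=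
  (hasSum_geometric_of_lt_one (by norm_num) (by norm_num)).mul_left _

lemma summable_lam_mul_D (h12 : α < 1 / 2) (n : ℕ) :
    Summable fun k : ℕ => (E.lam (n + 1 + k) : ℝ) * E.D (n + 1 + k) :=
  Summable.of_norm_bounded (E.hasSum_D_mul_pow n).summable (E.norm_lam_mul_D_le h12 n)

lemma abs_dplus_le (h12 : α < 1 / 2) (n : ℕ) :
    |E.dplus n| ≤ (1 - 6181 / 10000)⁻¹ := by
  rw [dplus, abs_div, abs_of_pos (E.D_pos n), div_le_iff₀' (E.D_pos n)]
  exact tsum_of_norm_bounded (E.hasSum_D_mul_pow n) (E.norm_lam_mul_D_le h12 n)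

lemma dplus_eq (h12 : α < 1 / 2) (n : ℕ) :
    E.dplus n = E.t n * ((E.lam (n + 1) : ℝ) + E.dplus (n + 1)) := by
  have hshift (k : ℕ) : n + 1 + (k + 1) = n + 1 + 1 + k := by omega
  have hD := E.D_pos n
  have ht := E.htpos n
  rw [dplus, dplus, (E.summable_lam_mul_D h12 n).tsum_eq_zero_add, tsum_congr fun k => by
    rw [hshift k], add_zero, D_succ]
  field_simp

lemma devMinus_zero : E.devMinus 0 = 0 := by rw [devMinus, dminus_zero, mul_zero]

lemma devMinus_succ_of_odd {n : ℕ} (h : Odd (E.a (n + 1))) :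
    E.devMinus (n + 1) = E.abar (n + 1) * (1 + E.e (n + 1) * E.devMinus n) := by
  rw [devMinus, devMinus, E.dminus_succ, E.lam_succ_of_odd h, E.paritySign_succ_of_odd h]
  linear_combination E.abar (n + 1) * E.paritySign_mul_self n

lemma devMinus_succ_of_even {n : ℕ} (h : Even (E.a (n + 1))) :
    E.devMinus (n + 1) = -E.e (n + 1) * E.abar (n + 1) * E.devMinus n := by
  rw [devMinus, devMinus, E.dminus_succ, E.lam_succ_of_even h, E.paritySign_succ_of_even h]
  ring

lemma devPlus_of_odd (h12 : α < 1 / 2) {n : ℕ} (h : Odd (E.a (n + 1))) :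
    E.devPlus n = E.t n * (1 - E.devPlus (n + 1)) := by
  rw [devPlus, devPlus, E.dplus_eq h12, E.lam_succ_of_odd h, E.paritySign_succ_of_odd h]
  linear_combination E.t n * E.paritySign_mul_self n

lemma devPlus_of_even (h12 : α < 1 / 2) {n : ℕ} (h : Even (E.a (n + 1))) :
    E.devPlus n = E.t n * E.devPlus (n + 1) := by
  rw [devPlus, devPlus, E.dplus_eq h12, E.lam_succ_of_even h, E.paritySign_succ_of_even h]
  ring

lemma devPlus_eq_mul_or (h12 : α < 1 / 2) (n : ℕ) :
    E.devPlus n = E.t n * E.devPlus (n + 1) ∨ E.devPlus n = E.t n * (1 - E.devPlus (n + 1)) :=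
  (Int.even_or_odd (E.a (n + 1))).imp (E.devPlus_of_even h12) (E.devPlus_of_odd h12)

lemma devPlus_mem_Icc (h12 : α < 1 / 2) (n : ℕ) : E.devPlus n ∈ Set.Icc 0 1 :=
  mem_Icc_of_contraction (fun n => ⟨(E.htpos n).le, E.t_le_golden h12 n⟩) (by norm_num)
    (fun n => by simpa only [devPlus, abs_neg, abs_mul, abs_paritySign, one_mul] using
      E.abs_dplus_le h12 n) (E.devPlus_eq_mul_or h12) n

lemma devPlus_nonneg (h12 : α < 1 / 2) (n : ℕ) : 0 ≤ E.devPlus n :=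
  (E.devPlus_mem_Icc h12 n).1

lemma devPlus_le_t (h12 : α < 1 / 2) (n : ℕ) : E.devPlus n ≤ E.t n := by
  obtain ⟨hnonneg, hle⟩ := E.devPlus_mem_Icc h12 (n + 1)
  have ht := E.htpos n
  rcases E.devPlus_eq_mul_or h12 n with h | h <;> rw [h] <;>
    exact mul_le_of_le_one_right ht.le (by linarith)

end ANIE

/-! ### The backward deviation -/

/-- The constant `θ₁ = (√13 - 3) / 2` of the statement: it is the fixed point of `x ↦ 1 / (3 + x)`,
so it is the limit of the reversed tails along a block `3, 3, 3, …`. -/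
noncomputable def theta1 : ℝ := (√13 - 3) / 2

lemma theta1_mul : theta1 * (3 + theta1) = 1 := by
  have := Real.mul_self_sqrt (show (0 : ℝ) ≤ 13 by norm_num)
  rw [theta1]
  linear_combination this / 4

lemma lt_theta1 : 3027 / 10000 < theta1 := by
  have : 36054 / 10000 < √13 := Real.lt_sqrt_of_sq_lt (by norm_num)
  rw [theta1]
  linarith

lemma theta1_lt : theta1 < 303 / 1000 := by
  have : √13 < 3606 / 1000 := (Real.sqrt_lt' (by norm_num)).2 (by norm_num)
  rw [theta1]
  linarith

namespace ANIE

variable {α : ℝ} (E : ANIE α)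

lemma eq_three_or_five_le {n : ℕ} (h : Odd (E.a (n + 1))) :
    E.a (n + 1) = 3 ∨ 5 ≤ E.a (n + 1) := by
  have := E.ha (n + 1) (by omega)
  obtain ⟨k, hk⟩ := h
  omega

lemma eq_two_or_four_le {n : ℕ} (h : Even (E.a (n + 1))) :
    E.a (n + 1) = 2 ∨ 4 ≤ E.a (n + 1) := by
  have := E.ha (n + 1) (by omega)
  obtain ⟨k, hk⟩ := h
  omega

lemma odd_of_eq_three {n : ℕ} (h : E.a n = 3) : Odd (E.a n) := h ▸ by decide

lemma even_of_eq_two {n : ℕ} (h : E.a n = 2) : Even (E.a n) := h ▸ even_two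

lemma devMinus_mem_Icc (h12 : α < 1 / 2) (n : ℕ) :
    E.devMinus n ∈ Set.Icc (-(1 / 4)) (1 / 2) := by
  induction n with
  | zero => rw [devMinus_zero]; norm_num
  | succ n ih =>
    obtain ⟨hlow, hupp⟩ := ih
    have hb := E.abar_nonneg (n + 1)
    rcases Int.even_or_odd (E.a (n + 1)) with hpar | hpar
    · have hb' := E.abar_le_golden h12 (n + 1)
      rw [E.devMinus_succ_of_even hpar]
      rcases E.he (n + 1) with he | he
      · have hb'' : E.abar (n + 1) ≤ 1 / 2 := (E.abar_step rfl rfl).le_half fun _ => he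
        rw [he]
        push_cast
        constructor <;> nlinarith
      · rw [he]
        push_cast
        constructor <;> nlinarith
    · have ha : 3 ≤ E.a (n + 1) := by have := E.eq_three_or_five_le hpar; omega
      rw [E.devMinus_succ_of_odd hpar]
      rcases E.he (n + 1) with he | he
      · have hb' := (E.abar_step rfl he).le_inv rfl (by norm_num) ha
        push_cast at hb'
        rw [he]
        push_cast
        constructor <;> nlinarith
      · have hb' := E.abar_le_two_fifths ha
        rw [he]
        push_cast
        constructor <;> nlinarith

lemma devMinus_mem_Icc_of_odd (h12 : α < 1 / 2) {n : ℕ} (h : Odd (E.a (n + 1))) :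
    E.devMinus (n + 1) ∈ Set.Icc (E.abar (n + 1) / 2) (3 / 2 * E.abar (n + 1)) := by
  have hb := E.abar_nonneg (n + 1)
  obtain ⟨hlow, hupp⟩ := E.devMinus_mem_Icc h12 n
  rw [E.devMinus_succ_of_odd h]
  rcases E.he (n + 1) with he | he <;> rw [he] <;> push_cast <;> constructor <;> nlinarith

lemma abs_devMinus_le_of_even (h12 : α < 1 / 2) {n : ℕ} (h : Even (E.a (n + 1))) :
    |E.devMinus (n + 1)| ≤ E.abar (n + 1) / 2 := by
  have hb := E.abar_nonneg (n + 1)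
  obtain ⟨hlow, hupp⟩ := E.devMinus_mem_Icc h12 n
  rw [E.devMinus_succ_of_even h, abs_le]
  rcases E.he (n + 1) with he | he <;> rw [he] <;> push_cast <;> constructor <;> nlinarith

lemma abs_devMinus_le_of_two_fifths_lt (h12 : α < 1 / 2) {n : ℕ}
    (h : 2 / 5 < E.abar n) : |E.devMinus n| ≤ E.abar n / 2 := by
  rcases n with _ | n
  · rw [abar_zero] at h
    norm_num at h
  · have ha : E.a (n + 1) = 2 := by
      by_contra ha
      linarith [E.abar_le_two_fifths (E.three_le_of_ne_two ha)]
    exact E.abs_devMinus_le_of_even h12 (E.even_of_eq_two ha)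

lemma le_devMinus_of_ne_two (h12 : α < 1 / 2) {n : ℕ} (h : E.a (n + 1) ≠ 2) :
    -(1 / 7) ≤ E.devMinus (n + 1) := by
  rcases Int.even_or_odd (E.a (n + 1)) with hpar | hpar
  · have hb := E.abar_le_two_div (by norm_num) ((E.eq_two_or_four_le hpar).resolve_left h)
    norm_num at hb
    linarith [(abs_le.1 (E.abs_devMinus_le_of_even h12 hpar)).1]
  · linarith [(E.devMinus_mem_Icc_of_odd h12 hpar).1, E.abar_nonneg (n + 1)]

lemma devMinus_le_of_three_neg (h12 : α < 1 / 2) {n : ℕ} (ha : E.a (n + 2) = 3)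
    (he : E.e (n + 2) = -1) (h2 : E.a (n + 1) = 2 → 2 / 5 < E.abar n) :
    E.devMinus (n + 2) ≤ 432 / 1000 := by
  have hb := (E.abar_step ha he).mul_eq_one
  have hb0 := E.abar_pos (n + 1)
  have hg : E.devMinus (n + 2) = E.abar (n + 2) * (1 + E.e (n + 2) * E.devMinus (n + 1)) :=
    E.devMinus_succ_of_odd (E.odd_of_eq_three ha)
  rw [he] at hg
  push_cast at hb hg
  suffices hprev : 432 / 1000 * E.abar (n + 1) - 296 / 1000 ≤ E.devMinus (n + 1) by nlinarith
  by_cases h : E.a (n + 1) = 2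
  · have hb' := (E.abar_step h (E.e_eq_one_of_two h he)).mul_eq_one
    have hb0' := E.abar_pos n
    have hg' := E.devMinus_succ_of_even (E.even_of_eq_two h)
    have hgle := (abs_le.1 (E.abs_devMinus_le_of_two_fifths_lt h12 (h2 h))).2
    have hgold := E.abar_le_golden h12 n
    rw [E.e_eq_one_of_two h he] at hg'
    push_cast at hb' hg'
    nlinarith
  · have hg' := E.le_devMinus_of_ne_two h12 h
    have := E.abar_le_two_fifths (E.three_le_of_ne_two h)
    rcases Int.even_or_odd (E.a (n + 1)) with hpar | hpar
    · have hb' := E.abar_le_two_div (by norm_num) ((E.eq_two_or_four_le hpar).resolve_left h)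
      norm_num at hb'
      linarith
    · linarith [(E.devMinus_mem_Icc_of_odd h12 hpar).1]

lemma two_fifths_lt_abar (h12 : α < 1 / 2) {n : ℕ} (ha : E.a (n + 1) = 2)
    (ha' : E.a (n + 2) = 3) (he' : E.e (n + 2) = -1) (ha'' : 3 ≤ E.a (n + 3)) :
    2 / 5 < E.abar n := by
  have ht2 := E.t_le_two_fifths (n := n + 2) ha''
  have ht0 := E.htpos (n + 2)
  have ht1 : 5 / 17 ≤ E.t (n + 1) := by
    rw [(E.t_step (n := n + 1) ha' rfl).ge_iff]
    rcases E.he (n + 1 + 2) with h | h <;> rw [h] <;> push_cast <;> linarith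
  have hc := E.t_mul_one_add_lt h12 ha he'
  have := E.abar_nonneg n
  nlinarith

lemma devMinus_succ_le_of_three {n : ℕ} (ha : E.a (n + 1) = 3)
    (he : E.e (n + 1) = 1) (hg : E.devMinus n ≤ (1 + E.abar n) / 3 - |E.abar n - theta1| / 6) :
    E.devMinus (n + 1) ≤ (1 + E.abar (n + 1)) / 3 - |E.abar (n + 1) - theta1| / 2 := by
  have s := E.abar_step ha he
  have hb := s.mul_eq_one
  have hb0 := E.abar_nonneg (n + 1)
  have hθ := lt_theta1
  have hθ' := theta1_lt
  have habs : |E.abar (n + 1) - theta1| = E.abar (n + 1) * theta1 * |E.abar n - theta1| := by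
    have hsub := s.sub_eq (x' := theta1) (y' := theta1) (by push_cast; linarith [theta1_mul])
    rw [hsub, abs_mul, abs_of_nonneg (by positivity), Int.cast_one, one_mul, abs_sub_comm]
  rw [E.devMinus_succ_of_odd (E.odd_of_eq_three ha), he, habs]
  push_cast at hb ⊢
  have hmul := mul_le_mul_of_nonneg_left hg hb0
  have habs0 : 0 ≤ E.abar (n + 1) * |E.abar n - theta1| := mul_nonneg hb0 (abs_nonneg _)
  nlinarith

/- Along a block `3, 3, 3, …` this is the invariant that propagates: the slack `|ᾱ_n - θ₁| / 6`
covers every way in which the block can start. -/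
lemma devMinus_le_of_three (h12 : α < 1 / 2) {n : ℕ} (ha : E.a (n + 1) = 3)
    (he : E.e (n + 1) = 1) : E.devMinus n ≤ (1 + E.abar n) / 3 - |E.abar n - theta1| / 6 := by
  have hθ := lt_theta1
  have hθ' := theta1_lt
  induction n with
  | zero =>
    rw [devMinus_zero, abar_zero, zero_sub, abs_neg, abs_of_pos (by linarith)]
    linarith
  | succ n ih =>
    have hb0 := E.abar_nonneg (n + 1)
    rcases Int.even_or_odd (E.a (n + 1)) with hpar | hpar
    · have hg := (abs_le.1 (E.abs_devMinus_le_of_even h12 hpar)).2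
      have hb := E.abar_le_golden h12 (n + 1)
      rcases abs_cases (E.abar (n + 1) - theta1) with h | h <;> linarith
    rcases E.eq_three_or_five_le hpar with h3 | h5
    · rcases E.he (n + 1) with he' | he'
      · have hg := E.devMinus_succ_le_of_three h3 he' (ih h3 he')
        linarith [abs_nonneg (E.abar (n + 1) - theta1)]
      · obtain ⟨m, rfl⟩ := E.exists_eq_succ_of_e_eq_neg_one he'
        have hg := E.devMinus_le_of_three_neg h12 h3 he' fun h2 =>
          E.two_fifths_lt_abar h12 h2 h3 he' ha.ge
        have hb : 1 / 3 ≤ E.abar (m + 2) := by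
          rw [(E.abar_step h3 he').ge_iff]
          push_cast
          linarith [E.abar_nonneg (m + 1)]
        have : |E.abar (m + 2) - theta1| = E.abar (m + 2) - theta1 := abs_of_pos (by linarith)
        change E.devMinus (m + 2) ≤ (1 + E.abar (m + 2)) / 3 - |E.abar (m + 2) - theta1| / 6
        linarith
    · have hg := (E.devMinus_mem_Icc_of_odd h12 hpar).2
      have hb := E.abar_le_two_div (by norm_num) h5
      norm_num at hb
      rcases abs_cases (E.abar (n + 1) - theta1) with h | h <;> linarith

end ANIE

/-! ### The constant -/

lemma sqrt_ten_mul_self : √10 * √10 = 10 := Real.mul_self_sqrt (by norm_num)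

lemma lt_sqrt_ten : 31622 / 10000 < √10 := Real.lt_sqrt_of_sq_lt (by norm_num)

lemma sqrt_ten_lt : √10 < 316228 / 100000 := (Real.sqrt_lt' (by norm_num)).2 (by norm_num)

/-- The last factor of the constant in the statement. -/
noncomputable def boundRatio : ℝ :=
  (3 - theta1 - theta1 / (1 - theta1)) / ((11 - √10) / 3 - theta1)

/-- Four times the constant in the statement. -/
noncomputable def boundConst : ℝ := (√10 - 3) * boundRatio

lemma boundRatio_mul : boundRatio * ((11 - √10) / 3 - theta1) = (8 - 4 * theta1) / 3 := by
  have hr := sqrt_ten_lt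
  have hθ := theta1_lt
  have hdiv : theta1 / (1 - theta1) = (1 + theta1) / 3 := by
    rw [div_eq_div_iff (by linarith) (by norm_num)]
    linear_combination theta1_mul
  rw [boundRatio, hdiv, div_mul_cancel₀ _ (by linarith)]
  ring

lemma lt_boundRatio : 979 / 1000 < boundRatio := by
  nlinarith [boundRatio_mul, sqrt_ten_lt, lt_sqrt_ten, lt_theta1, theta1_lt]

lemma boundRatio_lt : boundRatio < 97975 / 100000 := by
  nlinarith [boundRatio_mul, sqrt_ten_lt, lt_sqrt_ten, lt_theta1, theta1_lt]

lemma boundConst_le : boundConst ≤ 159 / 1000 := by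
  have := lt_sqrt_ten
  calc boundConst ≤ (316228 / 100000 - 3) * (97975 / 100000) :=
        mul_le_mul (by linarith [sqrt_ten_lt]) boundRatio_lt.le (by linarith [lt_boundRatio])
          (by norm_num)
    _ ≤ 159 / 1000 := by norm_num

namespace ANIE

variable {α : ℝ} (E : ANIE α)

lemma devMinus_le_of_three_of_two_neg (h12 : α < 1 / 2) {n : ℕ} (ha : E.a (n + 1) = 3)
    (he : E.e (n + 1) = -1) (ha' : E.a (n + 2) = 2) (he' : E.e (n + 2) = -1) :
    E.devMinus (n + 1) ≤ 432 / 1000 := by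
  obtain ⟨m, rfl⟩ := E.exists_eq_succ_of_e_eq_neg_one he
  exact E.devMinus_le_of_three_neg h12 ha he fun h2 =>
    absurd ha' (E.a_ne_two_of_two_three h2 (E.e_eq_one_of_two h2 he) ha he he')

/- Equality holds in the limit along a block `3, 3, 3, …`, where `ᾱ_n → θ₁`; this is where
the constant of the statement comes from. -/
lemma boundRatio_mul_le (h12 : α < 1 / 2) {n : ℕ} (ha : E.a (n + 1) = 2)
    (he : E.e (n + 1) = -1) :
    boundRatio * ((11 - √10) / 3 - E.abar n) ≤ 3 - E.abar n - E.devMinus n := by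
  obtain ⟨m, rfl⟩ := E.exists_eq_succ_of_e_eq_neg_one he
  have hb := E.abar_le_of_two_neg h12 ha he
  have hR := lt_boundRatio
  have hR' := boundRatio_lt
  have hcrude (hg : E.devMinus (m + 1) ≤ 432 / 1000) :
      boundRatio * ((11 - √10) / 3 - E.abar (m + 1)) ≤
        3 - E.abar (m + 1) - E.devMinus (m + 1) := by
    have := lt_sqrt_ten
    nlinarith
  rcases Int.even_or_odd (E.a (m + 1)) with hpar | hpar
  · exact hcrude (by linarith [(abs_le.1 (E.abs_devMinus_le_of_even h12 hpar)).2])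
  rcases E.eq_three_or_five_le hpar with h3 | h5
  · rcases E.he (m + 1) with he' | he'
    · have hg := E.devMinus_succ_le_of_three h3 he' (E.devMinus_le_of_three h12 h3 he')
      have hmul := boundRatio_mul
      rcases abs_cases (E.abar (m + 1) - theta1) with ⟨habs, h⟩ | ⟨habs, h⟩ <;>
        rw [habs] at hg <;> nlinarith
    · exact hcrude (E.devMinus_le_of_three_of_two_neg h12 h3 he' ha he)
  · have hg := (E.devMinus_mem_Icc_of_odd h12 hpar).2
    have hb5 := E.abar_le_two_div (by norm_num) h5
    norm_num at hb5
    exact hcrude (by linarith)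

end ANIE

/-! ### Descent along the digits `-4, -2, 2, 2` -/

lemma lt_and_two_mul_le_of_eq_mul {P Q d d' h h' : ℝ} (hP : 0 < P) (hP1 : P ≤ 1) (hQ : 0 < Q)
    (hQ4 : Q ≤ 1 / 4) (hd : d = P * (Q * d')) (hh : h = P * h') (hd' : 0 < d') (hlt : h < d) :
    h' < d' ∧ 2 * d ≤ d' := by
  have hQd : Q * d' ≤ 1 / 4 * d' := by gcongr
  constructor
  · rw [hh, hd] at hlt
    linarith [lt_of_mul_lt_mul_left hlt hP.le]
  · have hPQ : P * (Q * d') ≤ Q * d' := mul_le_of_le_one_left (by positivity) hP1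
    linarith

namespace ANIE

variable {α : ℝ} (E : ANIE α)

lemma mul_t_le_devPlus_of_odd (h12 : α < 1 / 2) {n : ℕ} (h : Odd (E.a (n + 1))) :
    381 / 1000 * E.t n ≤ E.devPlus n := by
  have hle := (E.devPlus_le_t h12 (n + 1)).trans (E.t_le_golden h12 (n + 1))
  have ht := E.htpos n
  rw [E.devPlus_of_odd h12 h]
  nlinarith

/-- A position at which `α_j` exceeds `d_j^+` by more than `(4 - √10) / 3`, the tail of the purely
periodic expansion with period `4, -2, 2, 2`. The descent below shows that there is none: the excess
would at least double every four steps. -/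
structure IsOvershoot (j : ℕ) : Prop where
  a_one : E.a (j + 1) = 4
  e_one : E.e (j + 1) = -1
  e_two : E.e (j + 2) = -1
  abar_ge : 38 / 100 ≤ E.abar j
  lt_t : (4 - √10) / 3 + E.devPlus j < E.t j

namespace IsOvershoot

variable {E} {j : ℕ}

lemma t_step_zero (h : IsOvershoot E j) : IsCFStep 4 (-1) (E.t (j + 1)) (E.t j) :=
  E.t_step h.a_one h.e_two

lemma root_zero_mul : (4 - √10) / 3 * (((4 : ℤ) : ℝ) + ((-1 : ℤ) : ℝ) * ((4 - √10) / 2)) = 1 := by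
  push_cast
  linear_combination -1 / 6 * sqrt_ten_mul_self

lemma root_one_mul : (4 - √10) / 2 * (((2 : ℤ) : ℝ) + ((1 : ℤ) : ℝ) * ((√10 - 2) / 3)) = 1 := by
  push_cast
  linear_combination -1 / 6 * sqrt_ten_mul_self

lemma root_two_mul : (√10 - 2) / 3 * (((2 : ℤ) : ℝ) + ((1 : ℤ) : ℝ) * ((√10 - 2) / 2)) = 1 := by
  push_cast
  linear_combination 1 / 6 * sqrt_ten_mul_self

lemma root_three_mul :
    (√10 - 2) / 2 * (((2 : ℤ) : ℝ) + ((-1 : ℤ) : ℝ) * ((4 - √10) / 3)) = 1 := by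
  push_cast
  linear_combination 1 / 6 * sqrt_ten_mul_self

lemma lt_t_one (h12 : α < 1 / 2) (h : IsOvershoot E j) : (4 - √10) / 2 < E.t (j + 1) := by
  have hlt : (4 - √10) / 3 < E.t j := by linarith [h.lt_t, E.devPlus_nonneg h12 j]
  have := (h.t_step_zero.lt_iff root_zero_mul (by linarith [sqrt_ten_lt])).1 hlt
  push_cast at this
  linarith

lemma a_two (h12 : α < 1 / 2) (h : IsOvershoot E j) : E.a (j + 2) = 2 := by
  by_contra ha
  linarith [E.t_le_two_fifths (E.three_le_of_ne_two ha), h.lt_t_one h12, sqrt_ten_lt]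

lemma t_step_one (h12 : α < 1 / 2) (h : IsOvershoot E j) :
    IsCFStep 2 1 (E.t (j + 2)) (E.t (j + 1)) :=
  E.t_step (n := j + 1) (h.a_two h12) (E.e_succ_eq_one_of_two (h.a_two h12) h.e_two)

lemma t_two_lt (h12 : α < 1 / 2) (h : IsOvershoot E j) : E.t (j + 2) < (√10 - 2) / 3 := by
  have := ((h.t_step_one h12).lt_iff root_one_mul (by linarith [sqrt_ten_lt])).1 (h.lt_t_one h12)
  push_cast at this
  linarith

lemma le_abar_one (h : IsOvershoot E j) : 50 / 181 ≤ E.abar (j + 1) := by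
  rw [(E.abar_step h.a_one h.e_one).ge_iff]
  push_cast
  linarith [h.abar_ge]

lemma lt_t_two (h12 : α < 1 / 2) (h : IsOvershoot E j) : 381 / 1000 < E.t (j + 2) :=
  lt_of_mul_one_add_le (E.abar_mul_one_add_le (h.a_two h12) h.e_two) (E.htpos _)
    (by linarith [h.le_abar_one])

lemma root_zero_mul_root_one_mem : (4 - √10) / 3 * ((4 - √10) / 2) ∈ Set.Ioc 0 (1 / 2) := by
  constructor <;> nlinarith [sqrt_ten_mul_self, lt_sqrt_ten, sqrt_ten_lt]

lemma root_two_mul_root_three_mem : (√10 - 2) / 3 * ((√10 - 2) / 2) ∈ Set.Ioc 0 (1 / 2) := by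
  constructor <;> nlinarith [sqrt_ten_mul_self, lt_sqrt_ten, sqrt_ten_lt]

lemma t_sub_eq (h12 : α < 1 / 2) (h : IsOvershoot E j) :
    E.t j - (4 - √10) / 3 = E.t j * E.t (j + 1) *
      ((4 - √10) / 3 * ((4 - √10) / 2) * ((√10 - 2) / 3 - E.t (j + 2))) := by
  have hsub := h.t_step_zero.sub_eq root_zero_mul
  have hsub' := (h.t_step_one h12).sub_eq root_one_mul
  push_cast at hsub hsub'
  linear_combination hsub + E.t j * ((4 - √10) / 3) * hsub'

lemma devPlus_eq (h12 : α < 1 / 2) (h : IsOvershoot E j) :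
    E.devPlus j = E.t j * E.t (j + 1) * E.devPlus (j + 2) := by
  rw [E.devPlus_of_even h12 (n := j) (h.a_one ▸ by decide),
    E.devPlus_of_even h12 (n := j + 1) (E.even_of_eq_two (h.a_two h12)), mul_assoc]

lemma devPlus_two_lt (h12 : α < 1 / 2) (h : IsOvershoot E j) : E.devPlus (j + 2) < 1 / 100 := by
  have hlt := h.lt_t
  rw [← lt_sub_iff_add_lt', h.t_sub_eq h12, h.devPlus_eq h12] at hlt
  refine (lt_of_mul_lt_mul_left hlt (mul_pos (E.htpos j) (E.htpos _)).le).trans_le ?_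
  nlinarith [root_zero_mul_root_one_mem.2, h.t_two_lt h12, h.lt_t_two h12, sqrt_ten_lt]

lemma a_three (h12 : α < 1 / 2) (h : IsOvershoot E j) : E.a (j + 3) = 2 := by
  have hlt := h.lt_t_two h12
  rcases Int.even_or_odd (E.a (j + 2 + 1)) with hpar | hpar
  · refine (E.eq_two_or_four_le hpar).resolve_right fun ha => ?_
    have := E.t_le_two_div (by norm_num) ha
    norm_num at this
    linarith
  · linarith [E.mul_t_le_devPlus_of_odd h12 hpar, h.devPlus_two_lt h12]

lemma e_four (h12 : α < 1 / 2) (h : IsOvershoot E j) : E.e (j + 4) = 1 := by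
  refine (E.he _).resolve_right fun he => ?_
  have hle : 1 / 2 ≤ E.t (j + 2) := by
    rw [(E.t_step (n := j + 2) (h.a_three h12) he).ge_iff]
    push_cast
    linarith [E.htpos (j + 2 + 1)]
  linarith [h.t_two_lt h12, sqrt_ten_lt]

lemma t_step_two (h12 : α < 1 / 2) (h : IsOvershoot E j) :
    IsCFStep 2 1 (E.t (j + 3)) (E.t (j + 2)) :=
  E.t_step (n := j + 2) (h.a_three h12) (h.e_four h12)

lemma lt_t_three (h12 : α < 1 / 2) (h : IsOvershoot E j) : (√10 - 2) / 2 < E.t (j + 3) := by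
  have hlt := h.t_two_lt h12
  have hsub := (h.t_step_two h12).sub_eq root_two_mul
  have hpos : 0 < E.t (j + 2) * ((√10 - 2) / 3) :=
    mul_pos (E.htpos _) (by linarith [lt_sqrt_ten])
  have := neg_of_mul_neg_right (hsub ▸ sub_neg.2 hlt) hpos.le
  push_cast at this
  linarith

lemma a_four (h12 : α < 1 / 2) (h : IsOvershoot E j) : E.a (j + 4) = 2 := by
  by_contra ha
  linarith [E.t_le_two_fifths (E.three_le_of_ne_two ha), h.lt_t_three h12, lt_sqrt_ten]

lemma e_five (h12 : α < 1 / 2) (h : IsOvershoot E j) : E.e (j + 5) = -1 := by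
  refine (E.he _).resolve_left fun he => ?_
  have hle : E.t (j + 3) ≤ 1 / 2 :=
    (E.t_step (n := j + 3) (h.a_four h12) he).le_half fun _ => rfl
  linarith [h.lt_t_three h12, lt_sqrt_ten]

lemma t_step_three (h12 : α < 1 / 2) (h : IsOvershoot E j) :
    IsCFStep 2 (-1) (E.t (j + 4)) (E.t (j + 3)) :=
  E.t_step (n := j + 3) (h.a_four h12) (h.e_five h12)

lemma lt_t_four (h12 : α < 1 / 2) (h : IsOvershoot E j) : (4 - √10) / 3 < E.t (j + 4) := by
  have := ((h.t_step_three h12).lt_iff root_three_mul (by linarith [lt_sqrt_ten])).1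
    (h.lt_t_three h12)
  push_cast at this
  linarith

lemma abar_three_le (h12 : α < 1 / 2) (h : IsOvershoot E j) : E.abar (j + 3) ≤ 388 / 1000 := by
  have htwo : 100 / 173 ≤ E.abar (j + 2) := by
    rw [(E.abar_step (n := j + 1) (h.a_two h12) h.e_two).ge_iff]
    push_cast
    linarith [h.le_abar_one]
  rw [(E.abar_step (n := j + 2) (h.a_three h12)
    (E.e_succ_eq_one_of_two (h.a_two h12) h.e_two)).le_iff]
  push_cast
  linarith

lemma le_abar_four (h12 : α < 1 / 2) (h : IsOvershoot E j) : 38 / 100 ≤ E.abar (j + 4) := by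
  rw [(E.abar_step (n := j + 3) (h.a_four h12) (h.e_four h12)).ge_iff]
  push_cast
  linarith [h.abar_three_le h12]

lemma t_four_lt (h12 : α < 1 / 2) (h : IsOvershoot E j) : E.t (j + 4) < 28 / 100 := by
  have hcond : E.t (j + 4) * (1 + E.abar (j + 3)) < E.abar (j + 3) :=
    E.t_mul_one_add_lt h12 (h.a_four h12) (h.e_five h12)
  nlinarith [h.abar_three_le h12, E.htlt1 (j + 4)]

lemma root_two_sub_t_two_eq (h12 : α < 1 / 2) (h : IsOvershoot E j) :
    (√10 - 2) / 3 - E.t (j + 2) = E.t (j + 2) * E.t (j + 3) *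
      ((√10 - 2) / 3 * ((√10 - 2) / 2) * (E.t (j + 4) - (4 - √10) / 3)) := by
  have hsub := (h.t_step_two h12).sub_eq root_two_mul
  have hsub' := (h.t_step_three h12).sub_eq root_three_mul
  push_cast at hsub hsub'
  linear_combination -hsub + E.t (j + 2) * ((√10 - 2) / 3) * hsub'

lemma devPlus_two_eq (h12 : α < 1 / 2) (h : IsOvershoot E j) :
    E.devPlus (j + 2) = E.t (j + 2) * E.t (j + 3) * E.devPlus (j + 4) := by
  rw [E.devPlus_of_even h12 (n := j + 2) (E.even_of_eq_two (h.a_three h12)),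
    E.devPlus_of_even h12 (n := j + 3) (E.even_of_eq_two (h.a_four h12)), mul_assoc]

lemma devPlus_lt_and_two_mul_le (h12 : α < 1 / 2) (h : IsOvershoot E j) :
    E.devPlus (j + 4) < E.t (j + 4) - (4 - √10) / 3 ∧
      2 * (E.t j - (4 - √10) / 3) ≤ E.t (j + 4) - (4 - √10) / 3 := by
  have hpos (k : ℕ) : 0 < E.t k * E.t (k + 1) := mul_pos (E.htpos k) (E.htpos _)
  have hle (k : ℕ) : E.t k * E.t (k + 1) ≤ 1 :=
    mul_le_one₀ (E.htlt1 k).le (E.htpos _).le (E.htlt1 _).le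
  obtain ⟨hy, hy'⟩ := root_zero_mul_root_one_mem
  obtain ⟨hz, hz'⟩ := root_two_mul_root_three_mem
  refine lt_and_two_mul_le_of_eq_mul (P := E.t j * E.t (j + 1) * (E.t (j + 2) * E.t (j + 3)))
    (Q := (4 - √10) / 3 * ((4 - √10) / 2) * ((√10 - 2) / 3 * ((√10 - 2) / 2)))
    (mul_pos (hpos j) (hpos (j + 2))) (mul_le_one₀ (hle j) (hpos (j + 2)).le (hle (j + 2)))
    (mul_pos hy hz) ((mul_le_mul hy' hz' hz.le (by norm_num)).trans (by norm_num)) ?_ ?_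
    (sub_pos.2 (h.lt_t_four h12)) (lt_sub_iff_add_lt'.2 h.lt_t)
  · rw [h.t_sub_eq h12, h.root_two_sub_t_two_eq h12]
    ring
  · rw [h.devPlus_eq h12, h.devPlus_two_eq h12, mul_assoc (E.t j * E.t (j + 1))]

lemma a_five (h12 : α < 1 / 2) (h : IsOvershoot E j) : E.a (j + 5) = 4 := by
  have hlt := h.t_four_lt h12
  have hgt : 279 / 1000 < E.t (j + 4) := by linarith [h.lt_t_four h12, sqrt_ten_lt]
  rcases Int.even_or_odd (E.a (j + 4 + 1)) with hpar | hpar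
  · rcases E.eq_two_or_four_le hpar with ha | ha
    · have hle : 1 / 3 ≤ E.t (j + 4) := by
        rw [(E.t_step ha rfl).ge_iff]
        have := E.htlt1 (j + 5)
        have := E.htpos (j + 5)
        rcases E.he (j + 4 + 2) with he | he <;> rw [he] <;> push_cast <;> linarith
      linarith
    · refine ha.antisymm' (not_lt.1 fun ha' => ?_)
      have := E.t_le_two_div (by norm_num) (Int.add_one_le_iff.2 ha')
      norm_num at this
      linarith
  · have hdev := E.mul_t_le_devPlus_of_odd h12 hpar
    have := (h.devPlus_lt_and_two_mul_le h12).1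
    linarith [sqrt_ten_lt]

lemma e_six (h12 : α < 1 / 2) (h : IsOvershoot E j) : E.e (j + 6) = -1 := by
  refine (E.he _).resolve_left fun he => ?_
  have hle := (E.t_step (n := j + 4) (h.a_five h12) he).le_inv rfl (by norm_num) le_rfl
  norm_num at hle
  linarith [h.lt_t_four h12, sqrt_ten_lt]

lemma add_four (h12 : α < 1 / 2) (h : IsOvershoot E j) : IsOvershoot E (j + 4) where
  a_one := h.a_five h12
  e_one := h.e_five h12
  e_two := h.e_six h12
  abar_ge := h.le_abar_four h12
  lt_t := by linarith [(h.devPlus_lt_and_two_mul_le h12).1]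

lemma add_four_mul (h12 : α < 1 / 2) (h : IsOvershoot E j) (n : ℕ) : IsOvershoot E (j + 4 * n) ∧
    2 ^ n * (E.t j - (4 - √10) / 3) ≤ E.t (j + 4 * n) - (4 - √10) / 3 := by
  induction n with
  | zero => exact ⟨h, by simp⟩
  | succ n ih =>
    refine ⟨ih.1.add_four h12, ?_⟩
    calc 2 ^ (n + 1) * (E.t j - (4 - √10) / 3) = 2 * (2 ^ n * (E.t j - (4 - √10) / 3)) := by ring
      _ ≤ 2 * (E.t (j + 4 * n) - (4 - √10) / 3) := by gcongr; exact ih.2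
      _ ≤ E.t (j + 4 * (n + 1)) - (4 - √10) / 3 := (ih.1.devPlus_lt_and_two_mul_le h12).2

end IsOvershoot

lemma not_isOvershoot (h12 : α < 1 / 2) (j : ℕ) : ¬IsOvershoot E j := fun h => by
  have hpos : 0 < E.t j - (4 - √10) / 3 := by linarith [h.lt_t, E.devPlus_nonneg h12 j]
  obtain ⟨n, hn⟩ := pow_unbounded_of_one_lt (E.t j - (4 - √10) / 3)⁻¹ one_lt_two
  have hgrow := (h.add_four_mul h12 n).2
  rw [inv_lt_iff_one_lt_mul₀ hpos] at hn
  linarith [E.htlt1 (j + 4 * n), sqrt_ten_lt]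

end ANIE

/-! ### The bound outside the block `2, -3` -/

lemma mul_sub_le_mul_add {c p q X T T' H : ℝ} (hT : T ≤ T') (hH : 0 ≤ H) (hX : 0 ≤ X)
    (hq : c * q ≤ X) (h : c * (p - q * T') ≤ X * (1 - T')) :
    c * (p - q * T) ≤ X * (1 - T + H) := by
  have hslope : c * q * (T' - T) ≤ X * (T' - T) :=
    mul_le_mul_of_nonneg_right hq (sub_nonneg.2 hT)
  have hXH := mul_nonneg hX hH
  linarith

namespace ANIE

variable {α : ℝ} (E : ANIE α)

/-- The inequality of the statement at the index `n`, cleared of its denominator and of the factor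
`1 / 4`, with the signs of `d_n^-` and `d_n^+` normalised. -/
def MeetsBound (n : ℕ) : Prop :=
  boundConst * (1 + E.e (n + 1) * E.abar n * E.t n) ≤
    (1 - E.abar n - E.devMinus n) * (1 + E.e (n + 1) * E.t n + E.devPlus n)

lemma meetsBound_of_pos (h12 : α < 1 / 2) {n : ℕ} (he : E.e (n + 1) = 1)
    (h : 159 / 1000 ≤ 1 - E.abar n - E.devMinus n) : E.MeetsBound n := by
  have hH := E.devPlus_nonneg h12 n
  have hT := E.htpos n
  have hAT : E.abar n * E.t n ≤ E.t n := mul_le_of_le_one_left hT.le (E.abar_lt_one n).le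
  rw [MeetsBound, he, Int.cast_one, one_mul, one_mul]
  exact mul_le_mul (boundConst_le.trans h) (by linarith)
    (by linarith [mul_nonneg (E.abar_nonneg n) hT.le]) (by linarith)

lemma meetsBound_of_neg (h12 : α < 1 / 2) {n : ℕ} (he : E.e (n + 1) = -1)
    (h : 318 / 1000 ≤ 1 - E.abar n - E.devMinus n) : E.MeetsBound n := by
  have hH := E.devPlus_nonneg h12 n
  have hT := E.t_le_half he
  have hAT := mul_nonneg (E.abar_nonneg n) (E.htpos n).le
  have hAT' : E.abar n * E.t n ≤ E.t n :=
    mul_le_of_le_one_left (E.htpos n).le (E.abar_lt_one n).le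
  rw [MeetsBound, he]
  push_cast
  calc boundConst * (1 + -1 * E.abar n * E.t n) ≤ 159 / 1000 * (1 + -1 * E.abar n * E.t n) :=
        mul_le_mul_of_nonneg_right boundConst_le (by linarith)
    _ ≤ 318 / 1000 * (1 + -1 * E.t n + E.devPlus n) := by linarith
    _ ≤ (1 - E.abar n - E.devMinus n) * (1 + -1 * E.t n + E.devPlus n) :=
        mul_le_mul_of_nonneg_right h (by linarith)

lemma le_one_sub_sub_of_ne_three (h12 : α < 1 / 2) {n : ℕ} (h : E.a (n + 1) ≠ 3)
    (hb : E.abar (n + 1) < 1 / 2) : 318 / 1000 ≤ 1 - E.abar (n + 1) - E.devMinus (n + 1) := by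
  rcases Int.even_or_odd (E.a (n + 1)) with hpar | hpar
  · rcases E.eq_two_or_four_le hpar with h2 | h4
    · have he : E.e (n + 1) = 1 := (E.he (n + 1)).resolve_right fun he => hb.not_ge <| by
        rw [(E.abar_step h2 he).ge_iff]
        push_cast
        linarith [E.abar_nonneg n]
      have hmul := mul_le_mul_of_nonneg_left (E.devMinus_mem_Icc h12 n).1 (E.abar_nonneg (n + 1))
      rw [E.devMinus_succ_of_even hpar, he]
      push_cast
      linarith
    · have hb4 := E.abar_le_two_div (by norm_num) h4
      norm_num at hb4
      linarith [(abs_le.1 (E.abs_devMinus_le_of_even h12 hpar)).2]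
  · have hb5 := E.abar_le_two_div (by norm_num) ((E.eq_three_or_five_le hpar).resolve_left h)
    norm_num at hb5
    linarith [(E.devMinus_mem_Icc_of_odd h12 hpar).2]

lemma one_sub_sub_eq_of_three {n : ℕ} (h : E.a (n + 1) = 3) :
    1 - E.abar (n + 1) - E.devMinus (n + 1) =
      E.abar (n + 1) * (1 + E.e (n + 1) * (E.abar n - E.devMinus n)) := by
  have hb := (E.abar_step h rfl).mul_eq_one
  push_cast at hb
  rw [E.devMinus_succ_of_odd (E.odd_of_eq_three h)]
  linear_combination -hb

lemma meetsBound_succ_of_three {n : ℕ} (h : E.a (n + 1) = 3)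
    (hle : boundConst * (3 + E.e (n + 1) * E.abar n + E.e (n + 2) * E.t (n + 1)) ≤
      (1 + E.e (n + 1) * (E.abar n - E.devMinus n)) *
        (1 + E.e (n + 2) * E.t (n + 1) + E.devPlus (n + 1))) :
    E.MeetsBound (n + 1) := by
  have hb := (E.abar_step h rfl).mul_eq_one
  push_cast at hb
  rw [MeetsBound, E.one_sub_sub_eq_of_three h]
  calc boundConst * (1 + E.e (n + 2) * E.abar (n + 1) * E.t (n + 1)) =
        E.abar (n + 1) *
          (boundConst * (3 + E.e (n + 1) * E.abar n + E.e (n + 2) * E.t (n + 1))) := by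
        linear_combination -boundConst * hb
    _ ≤ _ := by
        rw [mul_assoc (E.abar (n + 1))]
        exact mul_le_mul_of_nonneg_left hle (E.abar_nonneg (n + 1))

lemma t_le_of_le_abar {n : ℕ} (he : E.e (n + 1) = -1)
    (hb : 276 / 1000 ≤ E.abar n) : E.t n ≤ 42 / 100 := by
  by_cases ha : E.a (n + 1) = 2
  · have ht := lt_of_mul_one_add_le (E.abar_mul_one_add_le ha he) (E.htpos _) hb
    rw [(E.t_step ha (E.e_succ_eq_one_of_two ha he)).le_iff]
    push_cast
    linarith
  · linarith [E.t_le_two_fifths (E.three_le_of_ne_two ha)]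

lemma t_le_of_third_le_abar {n : ℕ} (he : E.e (n + 1) = -1)
    (hb : 1 / 3 ≤ E.abar n) : E.t n ≤ 2 / 5 := by
  by_cases ha : E.a (n + 1) = 2
  · have hcond := E.abar_mul_one_add_le ha he
    have ht0 := E.htpos (n + 1)
    have ht : 1 / 2 ≤ E.t (n + 1) := by nlinarith
    rw [(E.t_step ha (E.e_succ_eq_one_of_two ha he)).le_iff]
    push_cast
    linarith
  · exact E.t_le_two_fifths (E.three_le_of_ne_two ha)

lemma le_one_sub_add_of_ne_two (h12 : α < 1 / 2) {n : ℕ} (h : E.a (n + 1) ≠ 2) :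
    689 / 1000 - 265 / 1000 * E.abar (n + 1) ≤ 1 - E.abar (n + 1) + E.devMinus (n + 1) := by
  rcases Int.even_or_odd (E.a (n + 1)) with hpar | hpar
  · have ha := (E.eq_two_or_four_le hpar).resolve_left h
    rcases E.he (n + 1) with he | he
    · have hb := (E.abar_step rfl he).le_inv rfl (by norm_num) ha
      norm_num at hb
      linarith [(abs_le.1 (E.abs_devMinus_le_of_even h12 hpar)).1]
    · have hb := E.abar_le_two_div (by norm_num) ha
      norm_num at hb
      have hmul := mul_le_mul_of_nonneg_left (E.devMinus_mem_Icc h12 n).1 (E.abar_nonneg (n + 1))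
      rw [E.devMinus_succ_of_even hpar, he]
      push_cast
      linarith
  · have hb := E.abar_le_two_fifths (E.three_le_of_ne_two h)
    linarith [(E.devMinus_mem_Icc_of_odd h12 hpar).1]

lemma meetsBound_of_three_pos (h12 : α < 1 / 2) {n : ℕ} (h : E.a (n + 1) = 3)
    (he : E.e (n + 1) = 1) : E.MeetsBound (n + 1) := by
  have hb0 := E.abar_nonneg n
  have hg := (E.devMinus_mem_Icc h12 n).2
  have s := E.abar_step h he
  have hb := s.mul_eq_one
  push_cast at hb
  rcases E.he (n + 2) with he' | he'
  · refine E.meetsBound_of_pos h12 he' ?_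
    rw [E.one_sub_sub_eq_of_three h, he]
    push_cast
    nlinarith [E.abar_pos n]
  · have hdev := E.devMinus_le_of_three h12 h he
    have habs := neg_le_abs (E.abar n - theta1)
    have hθ := lt_theta1
    have hlow : 276 / 1000 ≤ E.abar (n + 1) := by
      rw [s.ge_iff]
      push_cast
      linarith [E.abar_le_golden h12 n]
    have hT := E.t_le_of_le_abar he' hlow
    have hc := boundConst_le
    have := mul_sub_le_mul_add (c := boundConst) (p := 3 + E.abar n) (q := 1)
      (X := 1 + (E.abar n - E.devMinus n)) hT (E.devPlus_nonneg h12 (n + 1)) (by linarith)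
      (by linarith) (by
        have := mul_le_mul_of_nonneg_right hc (show 0 ≤ 3 + E.abar n - 1 * (42 / 100) by linarith)
        linarith)
    refine E.meetsBound_succ_of_three h ?_
    rw [he, he']
    push_cast
    linarith

lemma meetsBound_of_three_neg (h12 : α < 1 / 2) {n : ℕ} (h : E.a (n + 2) = 3)
    (he : E.e (n + 2) = -1) (hprev : E.a (n + 1) ≠ 2) : E.MeetsBound (n + 2) := by
  have hX := E.le_one_sub_add_of_ne_two h12 hprev
  have hb0 := E.abar_nonneg (n + 1)
  have hb1 := E.abar_le_two_fifths (E.three_le_of_ne_two hprev)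
  have hthird : 1 / 3 ≤ E.abar (n + 2) := by
    rw [(E.abar_step (n := n + 1) h he).ge_iff]
    push_cast
    linarith
  rcases E.he (n + 3) with he' | he'
  · refine E.meetsBound_of_pos h12 he' ?_
    rw [E.one_sub_sub_eq_of_three (n := n + 1) h, he]
    push_cast
    nlinarith
  · have hT := E.t_le_of_third_le_abar he' hthird
    have hc := boundConst_le
    have := mul_sub_le_mul_add (c := boundConst) (p := 3 - E.abar (n + 1)) (q := 1)
      (X := 1 - E.abar (n + 1) + E.devMinus (n + 1)) hT (E.devPlus_nonneg h12 (n + 2))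
      (by linarith) (by linarith) (by nlinarith)
    refine E.meetsBound_succ_of_three (n := n + 1) h ?_
    rw [he, he']
    push_cast
    linarith

/-! ### The bound after the block `2, -3` -/

lemma one_lt_abar_mul_of_two_three (h12 : α < 1 / 2) {n : ℕ} (h2 : E.a (n + 1) = 2)
    (h3 : E.a (n + 2) = 3) (he : E.e (n + 2) = -1) :
    1 < E.abar n * (2 + E.e (n + 3) * E.t (n + 2)) := by
  have hlt := E.t_mul_one_add_lt h12 h2 he
  have s : IsCFStep 3 (E.e (n + 3)) (E.t (n + 2)) (E.t (n + 1)) := E.t_step h3 rfl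
  have hmul := s.mul_eq_one
  push_cast at hmul
  have := mul_lt_mul_of_pos_right hlt s.denom_pos
  push_cast at this
  linear_combination this - (1 + E.abar n) * hmul

lemma meetsBound_of_two_three {n : ℕ} (h2 : E.a (n + 1) = 2) (h3 : E.a (n + 2) = 3)
    (he : E.e (n + 2) = -1)
    (hle : boundConst * (5 + 3 * E.abar n + E.e (n + 3) * (2 + E.abar n) * E.t (n + 2)) ≤
      (1 + E.abar n - E.devMinus n) * (1 + E.e (n + 3) * E.t (n + 2) + E.devPlus (n + 2))) :
    E.MeetsBound (n + 2) := by
  have he1 := E.e_eq_one_of_two h2 he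
  have hb := (E.abar_step h2 he1).mul_eq_one
  push_cast at hb
  refine E.meetsBound_succ_of_three (n := n + 1) h3 ?_
  rw [he, E.devMinus_succ_of_even (E.even_of_eq_two h2), he1]
  push_cast
  calc boundConst * (3 + -1 * E.abar (n + 1) + E.e (n + 3) * E.t (n + 2)) =
        E.abar (n + 1) * (boundConst *
          (5 + 3 * E.abar n + E.e (n + 3) * (2 + E.abar n) * E.t (n + 2))) := by
        linear_combination -boundConst * (3 + E.e (n + 3) * E.t (n + 2)) * hb
    _ ≤ E.abar (n + 1) * ((1 + E.abar n - E.devMinus n) *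
          (1 + E.e (n + 3) * E.t (n + 2) + E.devPlus (n + 2))) :=
        mul_le_mul_of_nonneg_left hle (E.abar_nonneg (n + 1))
    _ = _ := by
        linear_combination (1 + E.e (n + 3) * E.t (n + 2) + E.devPlus (n + 2)) * hb

lemma meetsBound_of_two_three_pos (h12 : α < 1 / 2) {n : ℕ} (h2 : E.a (n + 1) = 2)
    (h3 : E.a (n + 2) = 3) (he : E.e (n + 2) = -1) (he' : E.e (n + 3) = 1) :
    E.MeetsBound (n + 2) := by
  have hb := E.one_lt_abar_mul_of_two_three h12 h2 h3 he
  have hT0 := E.htpos (n + 2)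
  have hT1 := E.htlt1 (n + 2)
  have hH := E.devPlus_nonneg h12 (n + 2)
  have hb0 := E.abar_nonneg n
  have hb1 := E.abar_lt_one n
  refine E.meetsBound_of_two_three h2 h3 he ?_
  rw [he'] at hb ⊢
  push_cast at hb ⊢
  suffices h : 159 / 1000 * (5 + 3 * E.abar n + (2 + E.abar n) * E.t (n + 2)) ≤
      (1 + E.abar n - E.devMinus n) * (1 + E.t (n + 2)) by
    have hc := mul_le_mul_of_nonneg_right boundConst_le
      (show 0 ≤ 5 + 3 * E.abar n + (2 + E.abar n) * E.t (n + 2) by positivity)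
    have hX := mul_nonneg
      (show 0 ≤ 1 + E.abar n - E.devMinus n by linarith [(E.devMinus_mem_Icc h12 n).2]) hH
    linarith
  by_cases hlarge : 2 / 5 < E.abar n
  · have hg := (abs_le.1 (E.abs_devMinus_le_of_two_fifths_lt h12 hlarge)).2
    nlinarith
  · have hg := (E.devMinus_mem_Icc h12 n).2
    nlinarith

/-- The consecutive digits `ε a = -2, 2, -3`, followed by the sign `-1`. Among the blocks `2, -3`
this is the only one with sign `-1` behind it and `ᾱ > 1 / 2` in front of the digit `2`. -/
structure IsTightBlock (n : ℕ) : Prop where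
  a_one : E.a (n + 1) = 2
  e_one : E.e (n + 1) = -1
  a_two : E.a (n + 2) = 2
  a_three : E.a (n + 3) = 3
  e_three : E.e (n + 3) = -1
  e_four : E.e (n + 4) = -1

lemma exists_isTightBlock (h12 : α < 1 / 2) {n : ℕ} (h2 : E.a (n + 1) = 2)
    (h3 : E.a (n + 2) = 3) (he : E.e (n + 2) = -1) (he' : E.e (n + 3) = -1) :
    ∃ k, n = k + 1 ∧ E.IsTightBlock k := by
  have hb := E.one_lt_abar_mul_of_two_three h12 h2 h3 he
  have hhalf : 1 / 2 < E.abar n := by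
    rw [he'] at hb
    push_cast at hb
    nlinarith [mul_nonneg (E.abar_nonneg n) (E.htpos (n + 2)).le]
  obtain ⟨k, rfl⟩ := Nat.exists_eq_succ_of_ne_zero (n := n) fun hn => by
    rw [hn, abar_zero] at hhalf
    norm_num at hhalf
  have ha : E.a (k + 1) = 2 := by
    by_contra ha
    linarith [E.abar_le_two_fifths (E.three_le_of_ne_two ha)]
  refine ⟨k, rfl, ha, (E.he _).resolve_left fun h1 => ?_, h2, h3, he, he'⟩
  exact hhalf.not_ge ((E.abar_step ha h1).le_half fun _ => rfl)

namespace IsTightBlock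

variable {E} {n : ℕ}

lemma abar_one_mul_eq_one (h : E.IsTightBlock n) : E.abar (n + 1) * (2 - E.abar n) = 1 := by
  have hb := (E.abar_step h.a_one h.e_one).mul_eq_one
  push_cast at hb
  linear_combination hb

lemma t_three_lt_abar (h12 : α < 1 / 2) (h : E.IsTightBlock n) : E.t (n + 3) < E.abar n := by
  have hlt := E.one_lt_abar_mul_of_two_three (n := n + 1) h12 h.a_two h.a_three h.e_three
  rw [h.e_four, ← h.abar_one_mul_eq_one] at hlt
  have := lt_of_mul_lt_mul_left hlt (E.abar_nonneg (n + 1))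
  push_cast at this
  linarith

lemma le_abar_three (h12 : α < 1 / 2) (h : E.IsTightBlock n) : 38 / 100 ≤ E.abar (n + 3) := by
  have he := E.e_succ_eq_one_of_two h.a_one h.e_one
  have htwo : 381 / 1000 ≤ E.abar (n + 2) := by
    rw [(E.abar_step (n := n + 1) h.a_two he).ge_iff]
    push_cast
    linarith [E.abar_le_golden h12 (n + 1)]
  rw [(E.abar_step (n := n + 2) h.a_three h.e_three).ge_iff]
  push_cast
  linarith

lemma abar_le (h12 : α < 1 / 2) (h : E.IsTightBlock n) : E.abar n ≤ 382 / 1000 :=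
  E.abar_le_of_two_neg h12 h.a_one h.e_one

lemma le_three_sub_sub (h12 : α < 1 / 2) (h : E.IsTightBlock n) :
    979 / 1000 * (26125 / 10000 - E.abar n) ≤ 3 - E.abar n - E.devMinus n := by
  refine le_trans ?_ (E.boundRatio_mul_le h12 h.a_one h.e_one)
  exact mul_le_mul lt_boundRatio.le (by linarith [sqrt_ten_lt]) (by linarith [h.abar_le h12])
    (by linarith [lt_boundRatio])

lemma meetsBound_of_le (h : E.IsTightBlock n)
    (hle : boundConst * (13 - 5 * E.abar n - (5 - 2 * E.abar n) * E.t (n + 3)) ≤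
      (3 - E.abar n - E.devMinus n) * (1 - E.t (n + 3) + E.devPlus (n + 3))) :
    E.MeetsBound (n + 3) := by
  have hb := h.abar_one_mul_eq_one
  refine E.meetsBound_of_two_three (n := n + 1) h.a_two h.a_three h.e_three ?_
  rw [h.e_four, E.devMinus_succ_of_even (E.even_of_eq_two h.a_one), h.e_one]
  push_cast
  calc boundConst * (5 + 3 * E.abar (n + 1) + -1 * (2 + E.abar (n + 1)) * E.t (n + 3)) =
        E.abar (n + 1) * (boundConst *
          (13 - 5 * E.abar n - (5 - 2 * E.abar n) * E.t (n + 3))) := by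
        linear_combination -boundConst * (5 - 2 * E.t (n + 3)) * hb
    _ ≤ E.abar (n + 1) * ((3 - E.abar n - E.devMinus n) *
          (1 - E.t (n + 3) + E.devPlus (n + 3))) :=
        mul_le_mul_of_nonneg_left hle (E.abar_nonneg (n + 1))
    _ = _ := by linear_combination (1 - E.t (n + 3) + E.devPlus (n + 3)) * hb

lemma meetsBound_of_t_le (h12 : α < 1 / 2) (h : E.IsTightBlock n) (hT : E.t (n + 3) ≤ 1 / 4) :
    E.MeetsBound (n + 3) := by
  have hw := h.abar_le h12
  have hX := h.le_three_sub_sub h12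
  refine h.meetsBound_of_le
    (mul_sub_le_mul_add hT (E.devPlus_nonneg h12 _) (by linarith) ?_ ?_)
  · have := mul_le_mul_of_nonneg_right boundConst_le (show 0 ≤ 5 - 2 * E.abar n by linarith)
    linarith [E.abar_nonneg n]
  · have := mul_le_mul_of_nonneg_right boundConst_le
      (show 0 ≤ 13 - 5 * E.abar n - (5 - 2 * E.abar n) * (1 / 4) by linarith)
    linarith

lemma meetsBound_of_three (h12 : α < 1 / 2) (h : E.IsTightBlock n) (h3 : E.a (n + 4) = 3) :
    E.MeetsBound (n + 3) := by
  have hw := h.abar_le h12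
  have hX := h.le_three_sub_sub h12
  have hTw := h.t_three_lt_abar h12
  have hH := E.mul_t_le_devPlus_of_odd h12 (n := n + 3) (E.odd_of_eq_three h3)
  have hT : 276 / 1000 ≤ E.t (n + 3) := by
    have s : IsCFStep 3 (E.e (n + 5)) (E.t (n + 4)) (E.t (n + 3)) := E.t_step h3 rfl
    rw [s.ge_iff]
    have := E.t_le_golden h12 (n + 4)
    have := E.htpos (n + 4)
    rcases E.he (n + 5) with he | he <;> rw [he] <;> push_cast <;> linarith
  refine h.meetsBound_of_le ?_
  have hmul := mul_le_mul_of_nonneg_left hT (show 0 ≤ 5 - 2 * E.abar n by linarith)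
  calc boundConst * (13 - 5 * E.abar n - (5 - 2 * E.abar n) * E.t (n + 3)) ≤
        159 / 1000 * (13 - 5 * E.abar n - (5 - 2 * E.abar n) * (276 / 1000)) :=
        mul_le_mul boundConst_le (by linarith) (by nlinarith) (by norm_num)
    _ ≤ (3 - E.abar n - E.devMinus n) * (763 / 1000) := by linarith
    _ ≤ (3 - E.abar n - E.devMinus n) * (1 - E.t (n + 3) + E.devPlus (n + 3)) :=
        mul_le_mul_of_nonneg_left (by linarith) (by linarith)

lemma meetsBound_of_le_devPlus (h12 : α < 1 / 2) (h : E.IsTightBlock n)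
    (hH : E.t (n + 3) ≤ (4 - √10) / 3 + E.devPlus (n + 3)) : E.MeetsBound (n + 3) := by
  have hw := h.abar_le h12
  have hr := lt_sqrt_ten
  have hr' := sqrt_ten_lt
  have hM : (√10 - 3) * (13 - 5 * E.abar n - (5 - 2 * E.abar n) * ((4 - √10) / 3)) =
      ((11 - √10) / 3 - E.abar n) * (1 - (4 - √10) / 3) := by
    linear_combination ((5 - 2 * E.abar n) / 3 + 1 / 9) * sqrt_ten_mul_self
  have hcore : (√10 - 3) * (13 - 5 * E.abar n - (5 - 2 * E.abar n) * E.t (n + 3)) ≤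
      ((11 - √10) / 3 - E.abar n) * (1 - E.t (n + 3) + E.devPlus (n + 3)) := by
    rcases le_total (E.t (n + 3)) ((4 - √10) / 3) with hT | hT
    · exact mul_sub_le_mul_add hT (E.devPlus_nonneg h12 _) (by linarith) (by nlinarith) hM.le
    · calc (√10 - 3) * (13 - 5 * E.abar n - (5 - 2 * E.abar n) * E.t (n + 3)) ≤
            (√10 - 3) * (13 - 5 * E.abar n - (5 - 2 * E.abar n) * ((4 - √10) / 3)) := by
            gcongr <;> linarith
        _ = ((11 - √10) / 3 - E.abar n) * (1 - (4 - √10) / 3) := hM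
        _ ≤ _ := mul_le_mul_of_nonneg_left (by linarith) (by linarith)
  have hR := lt_boundRatio
  refine h.meetsBound_of_le ?_
  calc boundConst * (13 - 5 * E.abar n - (5 - 2 * E.abar n) * E.t (n + 3)) =
        boundRatio *
          ((√10 - 3) * (13 - 5 * E.abar n - (5 - 2 * E.abar n) * E.t (n + 3))) := by
        rw [boundConst]
        ring
    _ ≤ boundRatio *
          (((11 - √10) / 3 - E.abar n) * (1 - E.t (n + 3) + E.devPlus (n + 3))) :=
        mul_le_mul_of_nonneg_left hcore (by linarith)
    _ ≤ _ := by
        rw [← mul_assoc]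
        exact mul_le_mul_of_nonneg_right (E.boundRatio_mul_le h12 h.a_one h.e_one)
          (by linarith [E.devPlus_nonneg h12 (n + 3)])

lemma meetsBound (h12 : α < 1 / 2) (h : E.IsTightBlock n) : E.MeetsBound (n + 3) := by
  have hne := E.a_ne_two_of_two_three (n := n + 1) h.a_two
    (E.e_succ_eq_one_of_two h.a_one h.e_one) h.a_three h.e_three h.e_four
  rcases (E.three_le_of_ne_two hne).eq_or_lt' with h3 | h4
  · exact h.meetsBound_of_three h12 h3
  rcases (Int.add_one_le_iff.2 h4).eq_or_lt' with h4 | h5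
  · rcases E.he (n + 5) with he | he
    · refine h.meetsBound_of_t_le h12 ?_
      have hT := (E.t_step (n := n + 3) h4 he).le_inv rfl (by norm_num) le_rfl
      norm_num at hT
      linarith
    · refine h.meetsBound_of_le_devPlus h12 (not_lt.1 fun hlt => ?_)
      exact E.not_isOvershoot h12 (n + 3) ⟨h4, h.e_four, he, h.le_abar_three h12, hlt⟩
  · refine h.meetsBound_of_t_le h12 ?_
    have hT := E.t_le_two_div (by norm_num) (Int.add_one_le_iff.2 h5)
    norm_num at hT
    linarith

end IsTightBlock

lemma meetsBound (h12 : α < 1 / 2) {n : ℕ} (hb : E.abar n < 1 / 2) :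
    E.MeetsBound n := by
  rcases n with _ | n
  · refine E.meetsBound_of_pos h12 E.he1 ?_
    rw [abar_zero, devMinus_zero]
    norm_num
  by_cases h3 : E.a (n + 1) = 3
  · rcases E.he (n + 1) with he | he
    · exact E.meetsBound_of_three_pos h12 h3 he
    obtain ⟨m, rfl⟩ := E.exists_eq_succ_of_e_eq_neg_one he
    by_cases h2 : E.a (m + 1) = 2
    · rcases E.he (m + 3) with he' | he'
      · exact E.meetsBound_of_two_three_pos h12 h2 h3 he he'
      · obtain ⟨k, rfl, hk⟩ := E.exists_isTightBlock h12 h2 h3 he he'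
        exact hk.meetsBound h12
    · exact E.meetsBound_of_three_neg h12 h3 he h2
  · have hX := E.le_one_sub_sub_of_ne_three h12 h3 hb
    rcases E.he (n + 2) with he' | he'
    · exact E.meetsBound_of_pos h12 he' (by linarith)
    · exact E.meetsBound_of_neg h12 he' hX

lemma eq_neg_paritySign (h12 : α < 1 / 2) {n : ℕ} {σ : ℝ} (hσ : σ = 1 ∨ σ = -1)
    (h : 0 < σ * E.dplus n) : σ = -E.paritySign n := by
  have hH : 0 ≤ -(E.paritySign n * E.dplus n) := E.devPlus_nonneg h12 n
  have hsign := mul_self_eq_one_iff.1 (E.paritySign_mul_self n)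
  rcases hσ with rfl | rfl <;> rcases hsign with hs | hs <;> rw [hs] at hH ⊢ <;> linarith

lemma one_add_e_mul_pos (n : ℕ) : 0 < 1 + E.e (n + 1) * E.abar n * E.t n := by
  have hnonneg := mul_nonneg (E.abar_nonneg n) (E.htpos n).le
  have hlt : E.abar n * E.t n < 1 :=
    mul_lt_one_of_nonneg_of_lt_one_left (E.abar_nonneg n) (E.abar_lt_one n) (E.htlt1 n).le
  rcases E.he (n + 1) with he | he <;> rw [he] <;> push_cast <;> linarith

variable {E} in
lemma MeetsBound.le_mul_div {n : ℕ} (h : E.MeetsBound n) :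
    boundConst ≤ (1 - E.abar n - E.devMinus n) *
      ((1 + E.e (n + 1) * E.t n + E.devPlus n) / (1 + E.e (n + 1) * E.abar n * E.t n)) := by
  rw [← mul_div_assoc, le_div_iff₀ (E.one_add_e_mul_pos n)]
  exact h

end ANIE

theorem stmt15_general (α : ℝ) (h12 : α < 1 / 2) (E : ANIE α)
    (θ1 : ℝ) (hθ1 : θ1 = (Real.sqrt 13 - 3) / 2) (i : ℕ) (σ : ℝ) (hσ : σ = 1 ∨ σ = -1)
    (hdp : 0 < σ * E.dplus i) (habar : E.abar i < 1 / 2) :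
    1 / 4 * (1 - E.abar i + σ * E.dminus i) *
        ((1 + (E.e (i + 1) : ℝ) * E.t i + σ * E.dplus i) /
          (1 + (E.e (i + 1) : ℝ) * E.abar i * E.t i)) ≥
      1 / 4 * (Real.sqrt 10 - 3) *
        ((3 - θ1 - θ1 / (1 - θ1)) / ((11 - Real.sqrt 10) / 3 - θ1)) := by
  have hθ : θ1 = theta1 := hθ1
  have hsign := E.eq_neg_paritySign h12 hσ hdp
  have hminus : σ * E.dminus i = -E.devMinus i := by rw [hsign, ANIE.devMinus, neg_mul]
  have hplus : σ * E.dplus i = E.devPlus i := by rw [hsign, ANIE.devPlus, neg_mul]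
  rw [hθ, hminus, hplus, ← sub_eq_add_neg, ge_iff_le, mul_assoc, mul_assoc]
  exact mul_le_mul_of_nonneg_left (E.meetsBound h12 habar).le_mul_div (by norm_num)

/-- Lemma 8: for an adjusted nearest integer expansion with `liminf a_i = 2`, if
`σ d_i^+ > 0` and `ᾱ_i < 1/2`, then `s_1(i), s_3(i) ≥
(1/4)(√10-3)·(3-θ_1-θ_1/(1-θ_1))/((11-√10)/3-θ_1) = 1/25.159…` for `γ_*`. -/
theorem stmt15 (α : ℝ) (hirr : Irrational α) (h0 : 0 < α) (h12 : α < 1 / 2)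
    (E : ANIE α) (hfreq : ∃ᶠ i in Filter.atTop, E.a i = 2)
    (θ1 : ℝ) (hθ1 : θ1 = (Real.sqrt 13 - 3) / 2)
    (i : ℕ) (hi : 1 ≤ i)
    (σ : ℝ) (hσ : σ = 1 ∨ σ = -1)
    (hdp : 0 < σ * E.dplus i) (habar : E.abar i < 1 / 2) :
    1 / 4 * (1 - E.abar i + σ * E.dminus i) *
        ((1 + (E.e (i + 1) : ℝ) * E.t i + σ * E.dplus i) /
          (1 + (E.e (i + 1) : ℝ) * E.abar i * E.t i)) ≥
      1 / 4 * (Real.sqrt 10 - 3) *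
        ((3 - θ1 - θ1 / (1 - θ1)) / ((11 - Real.sqrt 10) / 3 - θ1)) :=
  stmt15_general α h12 E θ1 hθ1 i σ hσ hdp habar
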